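/- arXiv:2106.13653 — 5 statements merged into one kernel-verified Lean document; each statement's English description precedes it below -/
import Mathlib

section
/- Let k, ℓ ∈ ℚ and r₀ ∈ ℕ, and suppose that k + ℓ + m ≠ 0 for every integer m with 0 ≤ m ≤ 2r₀ − 2. Then there exist rational numbers c_{r,a,j} (for 0 ≤ j ≤ r ≤ r₀ and 0 ≤ a ≤ r), depending only on k, ℓ, r, a, j, such that for ALL smooth functions f, g : ℍ → ℂ and all integers 0 ≤ a ≤ r ≤ r₀ one has the pointwise identity on ℍ: (R̃^a_k f)·(R̃^{r−a}_ℓ g) = Σ_{j=0}^{r} c_{r,a,j} · R̃^{r−j}_{k+ℓ+2j} [f, g]_j, where the Rankin–Cohen brackets [f,g]_j are formed with the weights (k, ℓ). -/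
/-! Give the symbol `f⁽ᵃ⁾ g⁽ᵇ⁾` (iterated raising operators of `f` and `g`) the monomial `xᵃ yᵇ`.  The
raising operator is a derivation for which weights add, so it acts on these symbols as
multiplication by `x + y`.  The bracket `[f,g]_j` corresponds to a homogeneous polynomial `P_j` of
degree `j`, and the claim is that `(x + y)^(r-j) P_j`, `j ≤ r`, span all forms of degree `r ≤ r₀`.

By induction on `r`, the span `rcSpan k ℓ (r+1)` contains `(x + y) xᵃ y^(r-a)` for all `a ≤ r`
(`raiseMono_add_mem`), hence modulo the span `xᵃ y^(r+1-a)` equals `(-1)ᵃ y^(r+1)`.  Reducing `P_(r+1)`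
in this way leaves `y^(r+1)` times the constant
`∑ C(k+r, s) C(ℓ+r, r+1-s) = C(k+ℓ+2r, r+1)` (Chu–Vandermonde, `gbinom_vandermonde`), whose
zeros are excluded by the hypothesis on `k + ℓ`.  So `y^(r+1)`, and with it every monomial of
degree `r+1`, is in the span.
-/

open Complex

noncomputable section

/-- Wirtinger derivative `∂_τ f = (∂_u f − i ∂_v f)/2`. -/
def wdz (f : ℂ → ℂ) (z : ℂ) : ℂ := (fderiv ℝ f z 1 - I * fderiv ℝ f z I) / 2

/-- Wirtinger derivative `∂_τ̄ f = (∂_u f + i ∂_v f)/2`. -/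
def wdzbar (f : ℂ → ℂ) (z : ℂ) : ℂ := (fderiv ℝ f z 1 + I * fderiv ℝ f z I) / 2

/-- Raising operator `R_k f = 2i ∂_τ f + (k/v) f`. -/
def raiseOp (k : ℚ) (f : ℂ → ℂ) : ℂ → ℂ :=
  fun z => 2 * I * wdz f z + ((k : ℂ) / (z.im : ℂ)) * f z

/-- Normalized raising operator `R̃_k = (4π)⁻¹ R_k`. -/
def nraise (k : ℚ) (f : ℂ → ℂ) : ℂ → ℂ :=
  fun z => (4 * (Real.pi : ℂ))⁻¹ * raiseOp k f z

/-- Iterated normalized raising operator `R̃ⁿ_k = R̃_{k+2(n−1)} ∘ ⋯ ∘ R̃_{k+2} ∘ R̃_k`. -/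
def nraiseIter (k : ℚ) : ℕ → (ℂ → ℂ) → (ℂ → ℂ)
  | 0 => fun f => f
  | n + 1 => fun f => nraise (k + 2 * n) (nraiseIter k n f)

/-- Generalized binomial coefficient `C(x,n) = x(x−1)⋯(x−n+1)/n!`. -/
def gbinom (x : ℚ) (n : ℕ) : ℚ := (∏ i ∈ Finset.range n, (x - i)) / n.factorial

/-- Rankin–Cohen bracket `[f,g]_r` formed with the weights `(k, ℓ)`. -/
def rcBracket (k ℓ : ℚ) (r : ℕ) (f g : ℂ → ℂ) : ℂ → ℂ :=
  fun z => ∑ s ∈ Finset.range (r + 1),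
    (-1 : ℂ) ^ (r - s) * ((gbinom (k + r - 1) s : ℚ) : ℂ) *
      ((gbinom (ℓ + r - 1) (r - s) : ℚ) : ℂ) *
      nraiseIter k (r - s) f z * nraiseIter ℓ s g z

/-- The open upper half-plane as a subset of `ℂ`. -/
def upperHalf : Set ℂ := {z : ℂ | 0 < z.im}

/-- Smoothness on the upper half-plane. -/
def SmoothH (f : ℂ → ℂ) : Prop := ContDiffOn ℝ (⊤ : ℕ∞) f upperHalf

lemma isOpen_upperHalf : IsOpen upperHalf :=
  isOpen_lt continuous_const Complex.continuous_im

/-! ### Raising operators on smooth functions -/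

lemma SmoothH.differentiableAt {f : ℂ → ℂ} (hf : SmoothH f) {z : ℂ} (hz : 0 < z.im) :
    DifferentiableAt ℝ f z :=
  (ContDiffOn.contDiffAt hf (isOpen_upperHalf.mem_nhds hz)).differentiableAt (by simp)

lemma SmoothH.mul {f g : ℂ → ℂ} (hf : SmoothH f) (hg : SmoothH g) :
    SmoothH (fun z => f z * g z) := ContDiffOn.mul hf hg

lemma SmoothH.const_mul {f : ℂ → ℂ} (c : ℂ) (hf : SmoothH f) :
    SmoothH (fun z => c * f z) := SmoothH.mul contDiffOn_const hf

lemma SmoothH.sum {ι : Type*} (s : Finset ι) {f : ι → ℂ → ℂ} (hf : ∀ i ∈ s, SmoothH (f i)) :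
    SmoothH (fun z => ∑ i ∈ s, f i z) := ContDiffOn.sum hf

lemma SmoothH.wdz {f : ℂ → ℂ} (hf : SmoothH f) : SmoothH (wdz f) := by
  have h1 : ContDiffOn ℝ (⊤ : ℕ∞) (fderiv ℝ f) upperHalf :=
    ContDiffOn.fderiv_of_isOpen hf isOpen_upperHalf (by simp)
  have h2 : ∀ v : ℂ, ContDiffOn ℝ (⊤ : ℕ∞) (fun z => fderiv ℝ f z v) upperHalf :=
    fun v => h1.clm_apply contDiffOn_const
  exact ContDiffOn.div_const ((h2 1).sub (SmoothH.const_mul I (h2 I))) 2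

lemma smoothH_const_div_im (c : ℂ) : SmoothH (fun z => c / (z.im : ℂ)) := by
  simp only [div_eq_mul_inv]
  refine SmoothH.const_mul c (ContDiffOn.inv ?_ ?_)
  · exact (Complex.ofRealCLM.contDiff.comp Complex.imCLM.contDiff).contDiffOn
  · intro z hz
    exact_mod_cast (ne_of_gt hz)

lemma SmoothH.nraise {f : ℂ → ℂ} (k : ℚ) (hf : SmoothH f) : SmoothH (nraise k f) :=
  SmoothH.const_mul _ (ContDiffOn.add (hf.wdz.const_mul (2 * I)) ((smoothH_const_div_im k).mul hf))

lemma SmoothH.nraiseIter {f : ℂ → ℂ} (k : ℚ) (hf : SmoothH f) (n : ℕ) :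
    SmoothH (nraiseIter k n f) := by
  induction n with
  | zero => exact hf
  | succ n ih => exact ih.nraise _

lemma SmoothH.rcBracket {f g : ℂ → ℂ} (k ℓ : ℚ) (r : ℕ) (hf : SmoothH f) (hg : SmoothH g) :
    SmoothH (rcBracket k ℓ r f g) :=
  SmoothH.sum _ fun _ _ => ((hf.nraiseIter k _).const_mul _).mul (hg.nraiseIter ℓ _)

/-- The raising operator only depends on the function on the (open) upper half-plane. -/
lemma nraise_congr {k : ℚ} {F G : ℂ → ℂ} (h : ∀ z : ℂ, 0 < z.im → F z = G z) {z : ℂ}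
    (hz : 0 < z.im) : nraise k F z = nraise k G z := by
  have he : F =ᶠ[nhds z] G :=
    Filter.eventually_of_mem (isOpen_upperHalf.mem_nhds hz) h
  simp only [nraise, raiseOp, _root_.wdz, he.fderiv_eq, h z hz]

lemma nraise_sum {ι : Type*} (k : ℚ) (s : Finset ι) (c : ι → ℂ) (F : ι → ℂ → ℂ)
    (hF : ∀ i ∈ s, SmoothH (F i)) {z : ℂ} (hz : 0 < z.im) :
    nraise k (fun z => ∑ i ∈ s, c i * F i z) z = ∑ i ∈ s, c i * nraise k (F i) z := by
  have h1 : fderiv ℝ (fun z => ∑ i ∈ s, c i * F i z) z = ∑ i ∈ s, c i • fderiv ℝ (F i) z := by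
    rw [fderiv_fun_sum fun i hi => ((hF i hi).differentiableAt hz).const_mul _]
    exact Finset.sum_congr rfl fun i hi => fderiv_const_mul ((hF i hi).differentiableAt hz) _
  simp only [nraise, raiseOp, _root_.wdz, h1, sum_apply,
    smul_apply, smul_eq_mul, Finset.mul_sum, ← Finset.sum_sub_distrib,
    Finset.sum_div, ← Finset.sum_add_distrib]
  exact Finset.sum_congr rfl fun i _ => by ring

/-- Leibniz rule: raising operators are derivations for which the weights add. -/
lemma nraise_mul (k ℓ : ℚ) {f g : ℂ → ℂ} (hf : SmoothH f) (hg : SmoothH g) {z : ℂ}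
    (hz : 0 < z.im) :
    nraise (k + ℓ) (fun z => f z * g z) z = nraise k f z * g z + f z * nraise ℓ g z := by
  simp only [nraise, raiseOp, _root_.wdz,
    fderiv_fun_mul (hf.differentiableAt hz) (hg.differentiableAt hz),
    add_apply, smul_apply, smul_eq_mul]
  push_cast
  ring

/-! ### Generalized binomial coefficients -/

lemma gbinom_eq_choose (x : ℚ) (n : ℕ) : gbinom x n = Ring.choose x n := by
  have h := Ring.descPochhammer_eq_factorial_smul_choose x n
  have hp : (descPochhammer ℤ n).smeval x = ∏ i ∈ Finset.range n, (x - i) := by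
    clear h
    induction n with
    | zero => simp [Polynomial.smeval_one]
    | succ n ih =>
      simp [descPochhammer_succ_right, Polynomial.smeval_mul, Polynomial.smeval_natCast,
        Finset.prod_range_succ, ih]
  rw [hp, nsmul_eq_mul] at h
  rw [gbinom, h, mul_div_cancel_left₀ _ (by positivity)]

lemma gbinom_vandermonde (x y : ℚ) (n : ℕ) :
    ∑ s ∈ Finset.range (n + 1), gbinom x s * gbinom y (n - s) = gbinom (x + y) n := by
  simp only [gbinom_eq_choose]
  rw [Ring.add_choose_eq n (Commute.all x y),
    Finset.Nat.sum_antidiagonal_eq_sum_range_succ (fun i j => Ring.choose x i * Ring.choose y j)]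

/-! ### The span of raised Rankin–Cohen brackets -/

/-- Operations on pairs `(f, g)` which, for smooth `f, g` and on the upper half-plane, are fixed
rational combinations of the weight `k + ℓ + 2r` functions `R̃^(r-j) [f,g]_j`, `j ≤ r`. The
coefficients do not depend on `f`, `g` or the point. -/
def rcSpan (k ℓ : ℚ) (r : ℕ) : Submodule ℚ ((ℂ → ℂ) → (ℂ → ℂ) → ℂ → ℂ) where
  carrier := {F | ∃ c : ℕ → ℚ, ∀ f g, SmoothH f → SmoothH g → ∀ z : ℂ, 0 < z.im →
    F f g z = ∑ j ∈ Finset.range (r + 1),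
      ((c j : ℚ) : ℂ) * nraiseIter (k + ℓ + 2 * j) (r - j) (rcBracket k ℓ j f g) z}
  add_mem' := by
    rintro F G ⟨c, hc⟩ ⟨d, hd⟩
    refine ⟨fun j => c j + d j, fun f g hf hg z hz => ?_⟩
    simp only [Pi.add_apply, hc f g hf hg z hz, hd f g hf hg z hz, ← Finset.sum_add_distrib]
    exact Finset.sum_congr rfl fun j _ => by push_cast; ring
  zero_mem' := ⟨fun _ => 0, fun f g _ _ z _ => by simp⟩
  smul_mem' := by
    rintro q F ⟨c, hc⟩
    refine ⟨fun j => q * c j, fun f g hf hg z hz => ?_⟩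
    simp only [Pi.smul_apply, hc f g hf hg z hz, Rat.smul_def, Finset.mul_sum]
    exact Finset.sum_congr rfl fun j _ => by push_cast; ring

lemma rcSpan_congr {k ℓ : ℚ} {r : ℕ} {F G : (ℂ → ℂ) → (ℂ → ℂ) → ℂ → ℂ} (hF : F ∈ rcSpan k ℓ r)
    (h : ∀ f g, SmoothH f → SmoothH g → ∀ z : ℂ, 0 < z.im → G f g z = F f g z) :
    G ∈ rcSpan k ℓ r := by
  obtain ⟨c, hc⟩ := hF
  exact ⟨c, fun f g hf hg z hz => (h f g hf hg z hz).trans (hc f g hf hg z hz)⟩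

lemma rcBracket_mem_rcSpan (k ℓ : ℚ) (r : ℕ) : rcBracket k ℓ r ∈ rcSpan k ℓ r := by
  refine ⟨fun j => if j = r then 1 else 0, fun f g _ _ z _ => ?_⟩
  rw [Finset.sum_eq_single_of_mem r (by simp) (fun j _ hj => by simp [hj])]
  simp [nraiseIter]

lemma rcSpan_raise {k ℓ : ℚ} {r : ℕ} {F : (ℂ → ℂ) → (ℂ → ℂ) → ℂ → ℂ} (hF : F ∈ rcSpan k ℓ r) :
    (fun f g => nraise (k + ℓ + 2 * r) (F f g)) ∈ rcSpan k ℓ (r + 1) := by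
  obtain ⟨c, hc⟩ := hF
  -- the new bracket `[f,g]_(r+1)` does not occur
  refine ⟨fun j => if j = r + 1 then 0 else c j, fun f g hf hg z hz => ?_⟩
  beta_reduce
  rw [nraise_congr (hc f g hf hg) hz,
    nraise_sum _ _ _ _ (fun j _ => (hf.rcBracket k ℓ j hg).nraiseIter _ _) hz,
    Finset.sum_range_succ _ (r + 1)]
  simp only [if_true, Rat.cast_zero, zero_mul, add_zero]
  refine Finset.sum_congr rfl fun j hj => ?_
  have hj' : j ≤ r := Nat.lt_succ_iff.mp (Finset.mem_range.mp hj)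
  rw [if_neg (by omega), Nat.succ_sub hj', nraiseIter]
  congr 2
  push_cast [hj']
  ring

/-- The product `(R̃ᵃ f) (R̃ᵇ g)` as an operation on pairs. -/
def raiseMono (k ℓ : ℚ) (a b : ℕ) : (ℂ → ℂ) → (ℂ → ℂ) → ℂ → ℂ :=
  fun f g z => nraiseIter k a f z * nraiseIter ℓ b g z

/-- Raising acts on monomials as multiplication by `x + y`. -/
lemma raiseMono_add_mem {k ℓ : ℚ} {a b : ℕ} (h : raiseMono k ℓ a b ∈ rcSpan k ℓ (a + b)) :
    raiseMono k ℓ (a + 1) b + raiseMono k ℓ a (b + 1) ∈ rcSpan k ℓ (a + b + 1) := by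
  refine rcSpan_congr (rcSpan_raise h) fun f g hf hg z hz => ?_
  have hw : k + ℓ + 2 * ((a + b : ℕ) : ℚ) = (k + 2 * a) + (ℓ + 2 * b) := by push_cast; ring
  rw [hw]
  exact (nraise_mul _ _ (hf.nraiseIter k a) (hg.nraiseIter ℓ b) hz).symm

/-- The constant obtained from `[f,g]_(r+1)` modulo `x + y` is nonzero. -/
lemma gbinom_ne_zero {k ℓ : ℚ} {r₀ r : ℕ}
    (h : ∀ m : ℤ, 0 ≤ m → m ≤ 2 * (r₀ : ℤ) - 2 → k + ℓ + (m : ℚ) ≠ 0) (hr : r + 1 ≤ r₀) :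
    gbinom (k + ℓ + 2 * r) (r + 1) ≠ 0 := by
  refine div_ne_zero (Finset.prod_ne_zero_iff.mpr fun i hi => ?_) (by positivity)
  have hi' := Finset.mem_range.mp hi
  have := h (2 * r - i) (by omega) (by omega)
  push_cast at this
  rwa [add_sub_assoc]

theorem raiseMono_mem {k ℓ : ℚ} {r₀ : ℕ}
    (h : ∀ m : ℤ, 0 ≤ m → m ≤ 2 * (r₀ : ℤ) - 2 → k + ℓ + (m : ℚ) ≠ 0) (r : ℕ) (hr : r ≤ r₀) :
    ∀ a b, a + b = r → raiseMono k ℓ a b ∈ rcSpan k ℓ r := by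
  induction r with
  | zero =>
    intro a b hab
    obtain ⟨rfl, rfl⟩ : a = 0 ∧ b = 0 := by omega
    refine rcSpan_congr (rcBracket_mem_rcSpan k ℓ 0) fun f g _ _ z _ => ?_
    simp [rcBracket, raiseMono, gbinom]
  | succ r ih =>
    have ih := ih (by omega)
    -- modulo `x + y`, every monomial is `± y^(r+1)`
    have hmod : ∀ a b, a + b = r + 1 →
        raiseMono k ℓ a b - (-1 : ℚ) ^ a • raiseMono k ℓ 0 (r + 1) ∈ rcSpan k ℓ (r + 1) := by
      intro a
      induction a with
      | zero =>
        intro b hb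
        obtain rfl : b = r + 1 := by omega
        simp
      | succ a iha =>
        intro b hb
        have h1 := iha (b + 1) (by omega)
        have hab : a + b = r := by omega
        have h2 := raiseMono_add_mem (k := k) (ℓ := ℓ) (a := a) (b := b)
          (by rw [hab]; exact ih a b hab)
        rw [hab] at h2
        convert Submodule.sub_mem _ h2 h1 using 1
        rw [pow_succ, mul_neg_one, neg_smul]
        abel
    set w : ℕ → ℚ := fun s => (-1) ^ (r + 1 - s) * gbinom (k + (r + 1 : ℕ) - 1) s *
      gbinom (ℓ + (r + 1 : ℕ) - 1) (r + 1 - s) with hw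
    have hbr : ∑ s ∈ Finset.range (r + 1 + 1), w s • raiseMono k ℓ (r + 1 - s) s ∈
        rcSpan k ℓ (r + 1) := by
      refine rcSpan_congr (rcBracket_mem_rcSpan k ℓ (r + 1)) fun f g _ _ z _ => ?_
      simp only [Finset.sum_apply, Pi.smul_apply, Rat.smul_def, rcBracket, raiseMono, hw]
      exact Finset.sum_congr rfl fun s _ => by push_cast; ring
    have hred : ∑ s ∈ Finset.range (r + 1 + 1), w s • (raiseMono k ℓ (r + 1 - s) s -
        (-1 : ℚ) ^ (r + 1 - s) • raiseMono k ℓ 0 (r + 1)) ∈ rcSpan k ℓ (r + 1) :=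
      Submodule.sum_mem _ fun s hs => Submodule.smul_mem _ _
        (hmod _ _ (Nat.sub_add_cancel (Nat.lt_succ_iff.mp (Finset.mem_range.mp hs))))
    have hconst : ∑ s ∈ Finset.range (r + 1 + 1), w s * (-1 : ℚ) ^ (r + 1 - s) =
        gbinom (k + ℓ + 2 * r) (r + 1) := by
      have hv := gbinom_vandermonde (k + (r + 1 : ℕ) - 1) (ℓ + (r + 1 : ℕ) - 1) (r + 1)
      have he : k + (r + 1 : ℕ) - 1 + (ℓ + (r + 1 : ℕ) - 1) = k + ℓ + 2 * r := by push_cast; ring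
      rw [he] at hv
      rw [← hv]
      refine Finset.sum_congr rfl fun s _ => ?_
      have hsq : (-1 : ℚ) ^ (r + 1 - s) * (-1) ^ (r + 1 - s) = 1 := by
        rw [← mul_pow]; simp
      simp only [hw]
      linear_combination (gbinom (k + (r + 1 : ℕ) - 1) s *
        gbinom (ℓ + (r + 1 : ℕ) - 1) (r + 1 - s)) * hsq
    have hlast : raiseMono k ℓ 0 (r + 1) ∈ rcSpan k ℓ (r + 1) := by
      have := Submodule.sub_mem _ hbr hred
      simp only [smul_sub, Finset.sum_sub_distrib, sub_sub_cancel, smul_smul,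
        ← Finset.sum_smul, hconst] at this
      exact (Submodule.smul_mem_iff _ (gbinom_ne_zero h hr)).mp this
    intro a b hab
    simpa using Submodule.add_mem _ (hmod a b hab) (Submodule.smul_mem _ ((-1 : ℚ) ^ a) hlast)

/-- Lemma 2.3 of the paper: products of iterated raising operators are rational
linear combinations of iterated raising operators of Rankin–Cohen brackets. -/
theorem raising_products_as_combinations_of_rc_brackets (k ℓ : ℚ) (r₀ : ℕ)
    (h : ∀ m : ℤ, 0 ≤ m → m ≤ 2 * (r₀ : ℤ) - 2 → k + ℓ + (m : ℚ) ≠ 0) :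
    ∃ c : ℕ → ℕ → ℕ → ℚ,
      ∀ f g : ℂ → ℂ,
        ContDiffOn ℝ (⊤ : ℕ∞) f {z : ℂ | 0 < z.im} →
        ContDiffOn ℝ (⊤ : ℕ∞) g {z : ℂ | 0 < z.im} →
        ∀ r a : ℕ, a ≤ r → r ≤ r₀ →
          ∀ z : ℂ, 0 < z.im →
            nraiseIter k a f z * nraiseIter ℓ (r - a) g z =
              ∑ j ∈ Finset.range (r + 1),
                ((c r a j : ℚ) : ℂ) *
                  nraiseIter (k + ℓ + 2 * j) (r - j) (rcBracket k ℓ j f g) z := by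
  have hmem := fun (r a : ℕ) (ha : a ≤ r) (hr : r ≤ r₀) =>
    raiseMono_mem h r hr a (r - a) (Nat.add_sub_cancel' ha)
  -- outside the range `a ≤ r ≤ r₀` the coefficients are set to `0`
  classical
  refine ⟨fun r a => if H : a ≤ r ∧ r ≤ r₀ then (hmem r a H.1 H.2).choose else 0,
    fun f g hf hg r a ha hr z hz => ?_⟩
  simp only [dif_pos (And.intro ha hr)]
  exact (hmem r a ha hr).choose_spec f g hf hg z hz
end
end

section
/- For every r ∈ ℕ and all x, y ∈ ℂ, Σ_{s=0}^{r} (−1)^s (r choose s)² x^{r−s} y^{s} = 2^{−r} Σ_{k=0}^{⌊r/2⌋} (−1)^k (r choose k) (2r−2k choose r) (x−y)^{r−2k} (x+y)^{2k}. Equivalently, Σ_{s=0}^{r} (−1)^s (r choose s)² x^{r−s} y^{s} equals the value at (x−y, x+y) of the homogenization of the r-th Legendre polynomial P_r, i.e., it equals (x+y)^r P_r((x−y)/(x+y)) whenever x + y ≠ 0. -/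
/-!
Both sides, multiplied by `2 ^ r`, are the coefficient of `T ^ r` in one polynomial,
`((T + u) ^ 2 - v ^ 2) ^ r` with `u = x - y` and `v = x + y`. Expanding in powers of `v ^ 2`
gives the Legendre side (`coeff_sq_sub_sq_pow`); this is the homogenized Rodrigues formula, since
taking the coefficient of `T ^ r` in `f (T + u)` amounts to taking the `r`-th derivative of `f` at
`u` divided by `r!`. On the other hand `(T + u) ^ 2 - v ^ 2 = (T + 2 x) (T - 2 y)`, and the Cauchy
product of the binomial expansions of the two factors gives the sum of squared binomials
(`coeff_mul_linear_pow`).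
-/

open Polynomial in
theorem coeff_mul_linear_pow (r : ℕ) (a b : ℂ) :
    ((X + C a) ^ r * (X + C b) ^ r : ℂ[X]).coeff r =
      ∑ s ∈ Finset.range (r + 1), (r.choose s : ℂ) ^ 2 * a ^ (r - s) * b ^ s := by
  rw [coeff_mul, Finset.Nat.sum_antidiagonal_eq_sum_range_succ_mk]
  refine Finset.sum_congr rfl fun s hs => ?_
  have hs' : s ≤ r := Nat.lt_succ_iff.mp (Finset.mem_range.mp hs)
  simp only [coeff_X_add_C_pow, Nat.choose_symm hs', Nat.sub_sub_self hs']
  ring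

open Polynomial in
theorem coeff_sq_sub_sq_pow (r : ℕ) (u v : ℂ) :
    (((X + C u) ^ 2 - C v ^ 2) ^ r : ℂ[X]).coeff r =
      ∑ k ∈ Finset.range (r / 2 + 1),
        (-1 : ℂ) ^ k * (r.choose k : ℂ) * ((2 * r - 2 * k).choose r : ℂ) *
          u ^ (r - 2 * k) * v ^ (2 * k) := by
  have expand : (((X + C u) ^ 2 - C v ^ 2) ^ r : ℂ[X]) =
      ∑ k ∈ Finset.range (r + 1),
        C ((-1) ^ k * (r.choose k : ℂ) * v ^ (2 * k)) * (X + C u) ^ (2 * r - 2 * k) := by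
    rw [sub_eq_neg_add, add_pow]
    refine Finset.sum_congr rfl fun k _ => ?_
    rw [← Nat.mul_sub, neg_pow, ← pow_mul, ← pow_mul]
    simp only [map_mul, map_pow, map_neg, map_one, map_natCast]
    ring
  rw [expand, finsetSum_coeff]
  symm
  refine Finset.sum_subset_zero_on_sdiff ?_ ?_ ?_
  · exact Finset.range_subset_range.mpr (by omega)
  · intro k hk
    -- For `k > r / 2` the power `2 r - 2 k` is less than `r`.
    simp only [Finset.mem_sdiff, Finset.mem_range] at hk
    rw [coeff_C_mul, coeff_X_add_C_pow, Nat.choose_eq_zero_of_lt (show 2 * r - 2 * k < r by omega)]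
    simp
  · intro k _
    rw [coeff_C_mul, coeff_X_add_C_pow, show 2 * r - 2 * k - r = r - 2 * k by omega]
    ring

open Polynomial in
theorem sum_sq_binom_eq_legendre_form (r : ℕ) (x y : ℂ) :
    (∑ s ∈ Finset.range (r + 1),
        (-1 : ℂ) ^ s * (r.choose s : ℂ) ^ 2 * x ^ (r - s) * y ^ s) =
      (2 : ℂ)⁻¹ ^ r * ∑ k ∈ Finset.range (r / 2 + 1),
        (-1 : ℂ) ^ k * (r.choose k : ℂ) * ((2 * r - 2 * k).choose r : ℂ) *
          (x - y) ^ (r - 2 * k) * (x + y) ^ (2 * k) := by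
  have factor : (((X + C (x - y)) ^ 2 - C (x + y) ^ 2) ^ r : ℂ[X]) =
      (X + C (2 * x)) ^ r * (X + C (-(2 * y))) ^ r := by
    rw [← mul_pow]
    congr 1
    simp only [map_sub, map_add, map_neg, map_mul, map_ofNat]
    ring
  rw [← coeff_sq_sub_sq_pow, factor, coeff_mul_linear_pow, Finset.mul_sum]
  refine Finset.sum_congr rfl fun s hs => ?_
  have hs' : s ≤ r := Nat.lt_succ_iff.mp (Finset.mem_range.mp hs)
  have h2 : (2 : ℂ)⁻¹ ^ r * (2 ^ (r - s) * 2 ^ s) = 1 := by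
    rw [← pow_add, Nat.sub_add_cancel hs', ← mul_pow]
    norm_num
  rw [neg_pow (2 * y), mul_pow, mul_pow]
  linear_combination (-((-1 : ℂ) ^ s * (r.choose s : ℂ) ^ 2 * x ^ (r - s) * y ^ s)) * h2


open Finset

noncomputable section

/-- The `r`-th Legendre polynomial
`P_r(t) = 2^{−r} Σ_{k=0}^{⌊r/2⌋} (−1)^k (r choose k) (2r−2k choose r) t^{r−2k}`. -/
def legendreP (r : ℕ) (t : ℂ) : ℂ :=
  (2 : ℂ)⁻¹ ^ r * ∑ k ∈ Finset.range (r / 2 + 1),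
    (-1 : ℂ) ^ k * (r.choose k : ℂ) * ((2 * r - 2 * k).choose r : ℂ) * t ^ (r - 2 * k)

/-- The identity underlying Example 2.2 of the paper:
`Σ_{s=0}^{r} (−1)^s (r choose s)² x^{r−s} y^{s}` equals the value at `(x−y, x+y)`
of the homogenization of the `r`-th Legendre polynomial. -/
theorem sum_sq_binom_eq_homogenized_legendre (r : ℕ) (x y : ℂ) :
    ((∑ s ∈ Finset.range (r + 1),
        (-1 : ℂ) ^ s * (r.choose s : ℂ) ^ 2 * x ^ (r - s) * y ^ s) =
      (2 : ℂ)⁻¹ ^ r * ∑ k ∈ Finset.range (r / 2 + 1),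
        (-1 : ℂ) ^ k * (r.choose k : ℂ) * ((2 * r - 2 * k).choose r : ℂ) *
          (x - y) ^ (r - 2 * k) * (x + y) ^ (2 * k))
    ∧ (x + y ≠ 0 →
        (∑ s ∈ Finset.range (r + 1),
            (-1 : ℂ) ^ s * (r.choose s : ℂ) ^ 2 * x ^ (r - s) * y ^ s) =
          (x + y) ^ r * legendreP r ((x - y) / (x + y))) := by
  refine ⟨sum_sq_binom_eq_legendre_form r x y, fun h => ?_⟩
  rw [sum_sq_binom_eq_legendre_form, legendreP, mul_left_comm, Finset.mul_sum (a := (x + y) ^ r)]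
  congr 1
  refine Finset.sum_congr rfl fun k hk => ?_
  have hk' : 2 * k ≤ r := by
    have := Finset.mem_range.mp hk
    omega
  have hpow : (x + y) ^ r = (x + y) ^ (r - 2 * k) * (x + y) ^ (2 * k) := by
    rw [← pow_add, Nat.sub_add_cancel hk']
  rw [hpow, div_pow]
  field_simp
end
end

section
/- For every totally real number field F with ring of integers O, there exist an integer n ≥ 1, a quadratic form Q : Fⁿ → F, and an O-lattice L ⊆ Fⁿ (a finitely generated O-submodule spanning Fⁿ over F) such that (L, Q) is even, totally positive, and ℤ-unimodular. In other words, the monoid U_F⁺ of totally positive even ℤ-unimodular O-lattices is non-trivial. -/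
/-!
Glue construction (the quaternion trick), with `O = 𝓞 F`, `D = 𝔡^{-1}` and the form
`Q(u, v) = ∑ uᵢ² + ∑ vᵢ²` on `F⁴ ⊕ F⁴`.

For the form `∑ uᵢ²`, the lattice `O⁴` has dual `(½D)⁴`. Choose `N > 0` with `N D ⊆ O`, and write
`m = 4N - 1` as a sum of four squares. Left multiplication by the corresponding integral quaternion
is an integral `4 × 4` matrix `A` with `A Aᵀ = Aᵀ A = m`. Since `m ≡ -1` modulo `4N`, this `A`
reverses the sign of the discriminant form of `O⁴`, so its graph is a Lagrangian glue group:
`L = {(u, v) : u ∈ (½D)⁴, v - A u ∈ O⁴}` is even and equal to its dual.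

* Even: if `v = A u + z` then `Q(u, v) = 4N u·u + (A (2u))·z + z·z`, and each term is in `D`.
* Self-dual: if `(u, v)` pairs `L` into `D`, testing against `0 ⊕ O⁴` gives `2v ∈ D⁴`, and testing
  against the graph of `A` on `(½D)⁴` shows that `w = u + Aᵀ v` satisfies `w D ⊆ D`, so `w` is
  integral. Hence `2u = 2w - Aᵀ (2v) ∈ D⁴` and `v - A u = 4N v - A w ∈ O⁴`.

Positivity is clear, because `Q` is a sum of squares.
-/


open NumberField

noncomputable section

/-- The inverse different `𝔡^{-1} = {a ∈ F : Tr_{F/ℚ}(ac) ∈ ℤ for all c ∈ O}`. -/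
def invDiff (F : Type*) [Field F] [NumberField F] : Set F :=
  {a : F | ∀ c : 𝓞 F, ∃ n : ℤ, Algebra.trace ℚ F (a * (c : F)) = (n : ℚ)}

/-! ### The inverse different -/

/-- The inverse different, as the trace dual of the unit fractional ideal. -/
def invDiffIdeal (F : Type*) [Field F] [NumberField F] :
    FractionalIdeal (nonZeroDivisors (𝓞 F)) F :=
  FractionalIdeal.dual ℤ ℚ 1

theorem mem_invDiff_iff {F : Type*} [Field F] [NumberField F] (a : F) :
    a ∈ invDiff F ↔ a ∈ invDiffIdeal F := by
  rw [invDiffIdeal, FractionalIdeal.mem_dual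
    (one_ne_zero : (1 : FractionalIdeal (nonZeroDivisors (𝓞 F)) F) ≠ 0)]
  simp only [FractionalIdeal.mem_one_iff, invDiff, Set.mem_ofPred_eq, Algebra.traceForm_apply]
  constructor
  · rintro h _ ⟨c, rfl⟩
    obtain ⟨n, hn⟩ := h c
    exact ⟨n, by simpa using hn.symm⟩
  · intro h c
    obtain ⟨n, hn⟩ := h (c : F) ⟨c, rfl⟩
    exact ⟨n, by simpa using hn.symm⟩

/-- An element multiplying the inverse different into itself is integral: it pairs the inverse
different into `ℤ`, hence lies in the double trace dual of `O`, which is `O`. -/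
theorem mem_one_of_mul_mem {F : Type*} [Field F] [NumberField F] (z : F)
    (h : ∀ d ∈ invDiffIdeal F, z * d ∈ invDiffIdeal F) :
    z ∈ (1 : Submodule (𝓞 F) F) := by
  have h1 : z ∈ FractionalIdeal.dual ℤ ℚ (invDiffIdeal F) := by
    have h0 : invDiffIdeal F ≠ 0 := by simp [invDiffIdeal]
    rw [FractionalIdeal.mem_dual h0]
    intro d hd
    obtain ⟨n, hn⟩ := (mem_invDiff_iff _).2 (h d hd) 1
    exact ⟨n, by simpa using hn.symm⟩
  rw [invDiffIdeal, FractionalIdeal.dual_dual] at h1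
  simpa using h1

theorem one_mem_invDiffIdeal (F : Type*) [Field F] [NumberField F] :
    (1 : F) ∈ invDiffIdeal F := by
  rw [← mem_invDiff_iff]
  intro c
  exact ⟨Algebra.trace ℤ (𝓞 F) c, by
    have := Algebra.trace_localization ℤ (nonZeroDivisors ℤ) (Rₘ := ℚ) (Sₘ := F) c
    simpa using this⟩

theorem exists_nat_mul_mem (F : Type*) [Field F] [NumberField F] :
    ∃ N : ℕ, 0 < N ∧ ∀ d ∈ invDiffIdeal F, (N : F) * d ∈ (1 : Submodule (𝓞 F) F) := by
  obtain ⟨a, ha, h⟩ := (invDiffIdeal F).isFractional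
  have ha0 : a ≠ 0 := nonZeroDivisors.ne_zero ha
  have hn : Ideal.absNorm (Ideal.span {a}) ≠ 0 := by
    simpa [Ideal.absNorm_eq_zero_iff] using ha0
  -- Take `N` to be the absolute norm of a denominator `a`; it is a multiple of `a`.
  refine ⟨_, Nat.pos_of_ne_zero hn, fun d hd => ?_⟩
  obtain ⟨b, hb⟩ := Ideal.mem_span_singleton'.1 (Ideal.absNorm_mem (Ideal.span {a}))
  obtain ⟨c, hc⟩ := h d hd
  refine Submodule.mem_one.2 ⟨b * c, ?_⟩
  have hb' := congrArg (algebraMap (𝓞 F) F) hb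
  simp only [map_mul, map_natCast] at hb'
  rw [map_mul, hc, ← hb', Algebra.smul_def]
  ring

/-! ### Quaternion matrices and sums of squares -/

open Matrix in
/-- Such an `A` is left multiplication by an integral quaternion of norm `m`, which exists by
Lagrange's four-square theorem. -/
theorem exists_matrix_mul_transpose (m : ℕ) :
    ∃ A : Matrix (Fin 4) (Fin 4) ℤ, A * Aᵀ = (m : ℤ) • 1 ∧ Aᵀ * A = (m : ℤ) • 1 := by
  obtain ⟨a, b, c, d, h⟩ := Nat.sum_four_squares m
  refine ⟨!![(a : ℤ), -b, -c, -d; b, a, -d, c; c, d, a, -b; d, -c, b, a], ?_, ?_⟩ <;>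
  · rw [← h]
    ext i j
    fin_cases i <;> fin_cases j <;>
      simp [Matrix.mul_apply, Fin.sum_univ_four] <;> ring

/-- The sum-of-squares form on `F^k`. -/
def sumSq (F : Type*) [Field F] (k : ℕ) : QuadraticForm F (Fin k → F) :=
  QuadraticMap.weightedSumSquares F (fun _ : Fin k => (1 : F))

theorem sumSq_apply {F : Type*} [Field F] {k : ℕ} (x : Fin k → F) : sumSq F k x = x ⬝ᵥ x := by
  simp [sumSq, QuadraticMap.weightedSumSquares_apply, dotProduct]

theorem polar_sumSq {F : Type*} [Field F] {k : ℕ} (x y : Fin k → F) :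
    QuadraticMap.polar (sumSq F k) x y = 2 * (x ⬝ᵥ y) := by
  simp only [QuadraticMap.polar, sumSq_apply, add_dotProduct, dotProduct_add,
    dotProduct_comm y x]
  ring

theorem dotProduct_append {F : Type*} [Field F] {k l : ℕ} (x : Fin (k + l) → F)
    (u : Fin k → F) (v : Fin l → F) :
    x ⬝ᵥ Fin.append u v
      = (fun i => x (Fin.castAdd l i)) ⬝ᵥ u + (fun i => x (Fin.natAdd k i)) ⬝ᵥ v := by
  simp [dotProduct, Fin.sum_univ_add]

/-! ### Integrality of matrix and dot products -/

section Membership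

variable {F : Type*} [Field F]

/-- The base change to `F` of an integral matrix. -/
abbrev castMat (F : Type*) [Field F] {k l : ℕ} (A : Matrix (Fin k) (Fin l) ℤ) :
    Matrix (Fin k) (Fin l) F :=
  A.map (Int.cast : ℤ → F)

theorem castMat_mulVec_mem (S : Submodule (𝓞 F) F) {k l : ℕ} (A : Matrix (Fin k) (Fin l) ℤ)
    {u : Fin l → F} (hu : ∀ i, u i ∈ S) (i : Fin k) : (castMat F A).mulVec u i ∈ S := by
  rw [Matrix.mulVec, dotProduct]
  refine S.sum_mem fun j _ => ?_
  simpa using S.smul_of_tower_mem (A i j) (hu j)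

theorem castMat_mul_transpose {A : Matrix (Fin 4) (Fin 4) ℤ} {m : ℕ}
    (h : A * A.transpose = (m : ℤ) • 1) (v : Fin 4 → F) :
    (castMat F A).mulVec ((castMat F A.transpose).mulVec v) = (m : F) • v := by
  have h' := congrArg (castMat F) h
  rw [castMat, Matrix.map_mul_intCast] at h'
  rw [Matrix.mulVec_mulVec, h']
  ext i
  simp only [castMat, Matrix.mulVec, dotProduct, Matrix.map_apply, Matrix.smul_apply,
    Matrix.one_apply]
  simp

theorem mul_mem_of_mem_one (S : Submodule (𝓞 F) F) {x z : F} (hx : x ∈ S)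
    (hz : z ∈ (1 : Submodule (𝓞 F) F)) : x * z ∈ S := by
  obtain ⟨c, rfl⟩ := Submodule.mem_one.1 hz
  rw [mul_comm, ← Algebra.smul_def]
  exact S.smul_mem c hx

theorem dotProduct_mem (S : Submodule (𝓞 F) F) {k : ℕ} {u z : Fin k → F} (hu : ∀ i, u i ∈ S)
    (hz : ∀ i, z i ∈ (1 : Submodule (𝓞 F) F)) : u ⬝ᵥ z ∈ S :=
  Submodule.sum_mem _ fun i _ => mul_mem_of_mem_one S (hu i) (hz i)

theorem one_le_invDiffIdeal [NumberField F] {x : F} (hx : x ∈ (1 : Submodule (𝓞 F) F)) :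
    x ∈ (invDiffIdeal F : Submodule (𝓞 F) F) := by
  simpa using mul_mem_of_mem_one (invDiffIdeal F : Submodule (𝓞 F) F) (one_mem_invDiffIdeal F) hx

end Membership

/-! ### The glue lattice -/

/-- The glue lattice `{(u, v) : u ∈ (½D)⁴, v - A u ∈ O⁴}` attached to an integral matrix `A`;
`u` is the first half of the coordinates and `v` the second half. -/
def glueLattice (F : Type*) [Field F] [NumberField F] (A : Matrix (Fin 4) (Fin 4) ℤ) :
    Submodule (𝓞 F) (Fin (4 + 4) → F) where
  carrier := {x | (∀ i, 2 * x (Fin.castAdd 4 i) ∈ (invDiffIdeal F : Submodule (𝓞 F) F)) ∧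
    ∀ i, x (Fin.natAdd 4 i) - (castMat F A).mulVec (fun j => x (Fin.castAdd 4 j)) i
      ∈ (1 : Submodule (𝓞 F) F)}
  zero_mem' := by
    have : (fun _ : Fin 4 => (0 : F)) = 0 := rfl
    exact ⟨fun i => by simpa only [Pi.zero_apply, mul_zero] using Submodule.zero_mem _,
      fun i => by simp [this]⟩
  add_mem' := by
    rintro x y ⟨hx, hx'⟩ ⟨hy, hy'⟩
    refine ⟨fun i => ?_, fun i => ?_⟩
    · simpa [mul_add] using add_mem (hx i) (hy i)
    · convert! add_mem (hx' i) (hy' i) using 1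
      have := congrFun ((castMat F A).mulVec_add (fun j => x (Fin.castAdd 4 j))
        (fun j => y (Fin.castAdd 4 j))) i
      simp only [Pi.add_apply] at this ⊢
      erw [this]
      ring
  smul_mem' := by
    rintro c x ⟨hx, hx'⟩
    refine ⟨fun i => ?_, fun i => ?_⟩
    · simpa using Submodule.smul_mem _ c (hx i)
    · convert! Submodule.smul_mem _ c (hx' i) using 1
      have := congrFun ((castMat F A).mulVec_smul c (fun j => x (Fin.castAdd 4 j))) i
      simp only [Pi.smul_apply, smul_sub] at this ⊢
      erw [this]

theorem mem_glueLattice {F : Type*} [Field F] [NumberField F] {A : Matrix (Fin 4) (Fin 4) ℤ}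
    {x : Fin (4 + 4) → F} :
    x ∈ glueLattice F A ↔
      (∀ i, 2 * x (Fin.castAdd 4 i) ∈ (invDiffIdeal F : Submodule (𝓞 F) F)) ∧
      ∀ i, x (Fin.natAdd 4 i) - (castMat F A).mulVec (fun j => x (Fin.castAdd 4 j)) i
        ∈ (1 : Submodule (𝓞 F) F) :=
  Iff.rfl

section Glue

variable {F : Type*} [Field F] [NumberField F] {A : Matrix (Fin 4) (Fin 4) ℤ}

theorem mem_glueLattice_of_integral {x : Fin (4 + 4) → F}
    (hx : ∀ i, x i ∈ (1 : Submodule (𝓞 F) F)) : x ∈ glueLattice F A := by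
  refine mem_glueLattice.2 ⟨fun i => one_le_invDiffIdeal ?_, fun i => sub_mem (hx _) ?_⟩
  · simpa [two_mul] using add_mem (hx _) (hx _)
  · exact castMat_mulVec_mem _ _ (fun j => hx _) i

theorem span_glueLattice : Submodule.span F (glueLattice F A : Set (Fin (4 + 4) → F)) = ⊤ := by
  rw [eq_top_iff, ← (Pi.basisFun F (Fin (4 + 4))).span_eq]
  refine Submodule.span_mono ?_
  rintro _ ⟨i, rfl⟩
  refine mem_glueLattice_of_integral fun j => ?_
  rw [Pi.basisFun_apply, Pi.single_apply]
  split_ifs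
  · exact Submodule.one_le.1 le_rfl
  · exact zero_mem _

variable {N : ℕ}

/-- `L` is contained in `(2N)⁻¹ O⁸`, a finite module over the Noetherian ring `O`. -/
theorem glueLattice_fg (hN : 0 < N)
    (hND : ∀ d ∈ invDiffIdeal F, (N : F) * d ∈ (1 : Submodule (𝓞 F) F)) :
    (glueLattice F A).FG := by
  have hN0 : (N : F) ≠ 0 := by exact_mod_cast hN.ne'
  have hu : ∀ x ∈ glueLattice F A, ∀ i, (2 * N : F) * x i ∈ (1 : Submodule (𝓞 F) F) := by
    intro x hx
    have h1 : ∀ i, (2 * N : F) * x (Fin.castAdd 4 i) ∈ (1 : Submodule (𝓞 F) F) := fun i => by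
      convert! hND _ (hx.1 i) using 1
      ring
    refine Fin.addCases h1 fun i => ?_
    have h2 := castMat_mulVec_mem _ A h1 i
    have h3 := Submodule.smul_of_tower_mem _ (2 * N : ℕ) (hx.2 i)
    convert! add_mem h2 h3 using 1
    have := congrFun ((castMat F A).mulVec_smul (2 * N : F) (fun j => x (Fin.castAdd 4 j))) i
    simp only [Pi.smul_apply, smul_eq_mul] at this
    erw [this]
    simp only [nsmul_eq_mul]
    push_cast
    ring
  let T : Submodule (𝓞 F) (Fin (4 + 4) → F) :=
    Submodule.span (𝓞 F) (Set.range fun i => Pi.single i ((2 * N : F)⁻¹))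
  have hT : T.FG := Submodule.fg_span (Set.finite_range _)
  have : IsNoetherian (𝓞 F) T := isNoetherian_of_fg_of_noetherian T hT
  refine Submodule.FG.of_le_of_isNoetherian (T := T) fun x hx => ?_
  rw [← Finset.univ_sum_single x]
  refine Submodule.sum_mem _ fun i _ => ?_
  obtain ⟨c, hc⟩ := Submodule.mem_one.1 (hu x hx i)
  have : Pi.single i (x i) = c • (Pi.single i ((2 * N : F)⁻¹) : Fin (4 + 4) → F) := by
    rw [← Pi.single_smul, Algebra.smul_def, hc]
    congr 1
    field_simp
  rw [this]
  exact Submodule.smul_mem _ _ (Submodule.subset_span ⟨i, rfl⟩)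

/-- Evenness of the glue lattice. -/
theorem sumSq_mem (hND : ∀ d ∈ invDiffIdeal F, (N : F) * d ∈ (1 : Submodule (𝓞 F) F))
    {m : ℕ} (hm : m + 1 = 4 * N) (hA : A.transpose * A = (m : ℤ) • 1)
    {x : Fin (4 + 4) → F} (hx : x ∈ glueLattice F A) :
    sumSq F (4 + 4) x ∈ (invDiffIdeal F : Submodule (𝓞 F) F) := by
  obtain ⟨hu, hz⟩ := mem_glueLattice.1 hx
  set u : Fin 4 → F := fun j => x (Fin.castAdd 4 j) with hu_def
  set v : Fin 4 → F := fun j => x (Fin.natAdd 4 j) with hv_def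
  set z : Fin 4 → F := v - (castMat F A).mulVec u with hz_def
  have hv : v = (castMat F A).mulVec u + z := by simp [hz_def]
  have hAu : (castMat F A).mulVec u ⬝ᵥ (castMat F A).mulVec u = m * (u ⬝ᵥ u) := by
    have h := castMat_mul_transpose (F := F) (A := A.transpose) (by simpa using hA) u
    rw [Matrix.transpose_transpose] at h
    rw [Matrix.dotProduct_mulVec, ← Matrix.mulVec_transpose]
    erw [h]
    simp
  have hm' : (m : F) + 1 = 4 * N := by exact_mod_cast hm
  have key : sumSq F (4 + 4) x = ((2 : F) • u) ⬝ᵥ ((N * 2 : F) • u)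
      + (castMat F A).mulVec ((2 : F) • u) ⬝ᵥ z + z ⬝ᵥ z := by
    have h0 : sumSq F (4 + 4) x = u ⬝ᵥ u + v ⬝ᵥ v := by
      rw [sumSq_apply, dotProduct, Fin.sum_univ_add]
      rfl
    rw [h0, hv, add_dotProduct, dotProduct_add, dotProduct_add, hAu, Matrix.mulVec_smul,
      dotProduct_comm z]
    simp only [smul_dotProduct, dotProduct_smul, smul_eq_mul]
    linear_combination (u ⬝ᵥ u) * hm'
  rw [key]
  refine add_mem (add_mem (dotProduct_mem _ hu fun i => ?_)
    (dotProduct_mem _ (castMat_mulVec_mem _ _ hu) hz))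
    (dotProduct_mem _ (fun i => one_le_invDiffIdeal (hz i)) hz)
  simpa [mul_assoc] using hND _ (hu i)

/-- The dual of the glue lattice is contained in it. -/
theorem mem_glueLattice_of_polar_mem
    (hND : ∀ d ∈ invDiffIdeal F, (N : F) * d ∈ (1 : Submodule (𝓞 F) F))
    {m : ℕ} (hm : m + 1 = 4 * N) (hA : A * A.transpose = (m : ℤ) • 1)
    {y : Fin (4 + 4) → F}
    (hy : ∀ x ∈ glueLattice F A, QuadraticMap.polar (sumSq F (4 + 4)) y x
      ∈ (invDiffIdeal F : Submodule (𝓞 F) F)) :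
    y ∈ glueLattice F A := by
  set u : Fin 4 → F := fun j => y (Fin.castAdd 4 j) with hu_def
  set v : Fin 4 → F := fun j => y (Fin.natAdd 4 j) with hv_def
  have hm' : (m : F) + 1 = 4 * N := by exact_mod_cast hm
  simp only [polar_sumSq] at hy
  -- Test against the vector `(0, eᵢ)`.
  have hv : ∀ i, ((2 : F) • v) i ∈ (invDiffIdeal F : Submodule (𝓞 F) F) := by
    intro i
    have h := hy (Fin.append 0 (Pi.single i 1)) (mem_glueLattice_of_integral
      (Fin.addCases (fun j => by simp) fun j => by
        rw [Fin.append_right, Pi.single_apply]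
        split_ifs
        · exact Submodule.one_le.1 le_rfl
        · exact zero_mem _))
    rw [dotProduct_append] at h
    rw [dotProduct_zero, zero_add, dotProduct_single_one] at h
    exact h
  set w : Fin 4 → F := u + (castMat F A.transpose).mulVec v with hw_def
  have hw : ∀ i, w i ∈ (1 : Submodule (𝓞 F) F) := by
    intro i
    -- Test against the vector `(½d eᵢ, A (½d eᵢ))`.
    refine mem_one_of_mul_mem _ fun d hd => ?_
    have h := hy (Fin.append (Pi.single i (d / 2))
      ((castMat F A).mulVec (Pi.single i (d / 2)))) (mem_glueLattice.2 ⟨fun j => ?_, fun j => ?_⟩)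
    · rw [dotProduct_append, Matrix.dotProduct_mulVec, ← Matrix.mulVec_transpose,
        ← add_dotProduct, dotProduct_single] at h
      convert! h using 1
      change w i * d = 2 * (w i * (d / 2))
      ring
    · rw [Fin.append_left, Pi.single_apply]
      split_ifs
      · rwa [mul_div_cancel₀ _ two_ne_zero]
      · simp
    · rw [Fin.append_right]
      simp only [Fin.append_left, sub_self]
      exact zero_mem _
  have hu : (2 : F) • u = (2 : F) • w - (castMat F A.transpose).mulVec ((2 : F) • v) := by
    rw [Matrix.mulVec_smul, hw_def, smul_add, add_sub_cancel_right]
  have hz : v - (castMat F A).mulVec u = (N : F) • (2 : F) • ((2 : F) • v)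
      - (castMat F A).mulVec w := by
    rw [hw_def, Matrix.mulVec_add, castMat_mul_transpose hA, smul_smul, smul_smul,
      show (N : F) * 2 * 2 = m + 1 by rw [hm']; ring, add_smul, one_smul]
    abel
  refine mem_glueLattice.2 ⟨fun i => ?_, fun i => ?_⟩
  · change ((2 : F) • u) i ∈ _
    rw [hu]
    refine sub_mem (one_le_invDiffIdeal ?_) (castMat_mulVec_mem _ _ hv i)
    simpa [two_mul] using add_mem (hw i) (hw i)
  · change (v - (castMat F A).mulVec u) i ∈ _
    rw [hz]
    refine sub_mem (hND _ ?_) (castMat_mulVec_mem _ _ hw i)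
    simpa [two_mul] using add_mem (hv i) (hv i)

end Glue

/-- Proposition 2.4 of the paper: for every totally real number field `F`
(totally real being expressed by saying that the number of real embeddings
equals the degree), the monoid `U_F⁺` of totally positive even ℤ-unimodular
`O`-lattices is non-trivial. -/
theorem exists_totally_positive_even_unimodular_lattice
    (F : Type) [Field F] [NumberField F]
    (htr : Nat.card (F →+* ℝ) = Module.finrank ℚ F) :
    ∃ (n : ℕ) (_ : 0 < n) (Q : QuadraticForm F (Fin n → F))
      (L : Submodule (𝓞 F) (Fin n → F)),
      -- `L` is an `O`-lattice: finitely generated and spanning over `F`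
      L.FG ∧ Submodule.span F (L : Set (Fin n → F)) = ⊤ ∧
      -- even: `Q(L) ⊆ 𝔡^{-1}`
      (∀ x ∈ L, Q x ∈ invDiff F) ∧
      -- totally positive
      (∀ (σ : F →+* ℝ) (x : Fin n → F), x ≠ 0 → 0 < σ (Q x)) ∧
      -- ℤ-unimodular: `L = L'`
      ((L : Set (Fin n → F)) =
        {y : Fin n → F | ∀ x ∈ L, QuadraticMap.polar (⇑Q) y x ∈ invDiff F}) := by
  obtain ⟨N, hN, hND⟩ := exists_nat_mul_mem F
  obtain ⟨A, hA, hA'⟩ := exists_matrix_mul_transpose (4 * N - 1)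
  have hm : 4 * N - 1 + 1 = 4 * N := by omega
  refine ⟨4 + 4, by norm_num, sumSq F (4 + 4), glueLattice F A, glueLattice_fg hN hND,
    span_glueLattice, fun x hx => (mem_invDiff_iff _).2 (sumSq_mem hND hm hA' hx), ?_, ?_⟩
  · intro σ x hx
    rw [sumSq_apply, dotProduct, map_sum]
    simp only [map_mul]
    obtain ⟨i, hi⟩ := Function.ne_iff.1 hx
    refine Finset.sum_pos' (fun j _ => mul_self_nonneg _) ⟨i, Finset.mem_univ i, ?_⟩
    exact mul_self_pos.2 ((map_ne_zero σ).2 hi)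
  · ext y
    simp only [mem_invDiff_iff, SetLike.mem_coe, Set.mem_ofPred_eq]
    refine ⟨fun hy x hx => ?_, mem_glueLattice_of_polar_mem hND hm hA⟩
    rw [← FractionalIdeal.mem_coe]
    exact sub_mem (sub_mem (sumSq_mem hND hm hA' (add_mem hy hx)) (sumSq_mem hND hm hA' hy))
      (sumSq_mem hND hm hA' hx)
end
end

section
/- Let F be a totally real number field with ring of integers O and inverse different 𝔡^{-1}. Let (V, Q) be a finite-dimensional F-quadratic space with associated bilinear form B, and let L ⊆ V be an O-lattice that is integral (Q(x) ∈ O for all x ∈ L) and O-unimodular, i.e. L = L^# := {y ∈ V : B(y,x) ∈ O for all x ∈ L}. Suppose 𝔞 ⊆ O is a nonzero ideal and δ ∈ F^× are such that the O-submodule δ·𝔞² of F (where 𝔞² is the product ideal) equals 𝔡^{-1}. Then the O-lattice 𝔞L (the O-submodule of V generated by all products a·x with a ∈ 𝔞 and x ∈ L), equipped with the quadratic form δQ, is even and ℤ-unimodular: δQ(y) ∈ 𝔡^{-1} for all y ∈ 𝔞L, and 𝔞L = {y ∈ V : δ·B(y,x) ∈ 𝔡^{-1} for all x ∈ 𝔞L}.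 Moreover 𝔞L is nonzero whenever L is nonzero. -/
/-!
Put `𝔟 = 𝔞²`. Since `𝔡⁻¹ = δ𝔟` and `δ ≠ 0`, a scaled value `δt` lies in `𝔡⁻¹` exactly when `t ∈ 𝔟`, so
`δ` and the trace disappear from the problem (`mul_mem_invDiff_iff`).

Bilinearity and integrality give `B(𝔞L, 𝔞L) ⊆ 𝔟`, and expanding `Q` on sums of products `a • x` then gives
`Q(𝔞L) ⊆ 𝔟`. Conversely, let `B(y, 𝔞L) ⊆ 𝔟`. As `O` is a Dedekind domain, `1 ∈ 𝔞𝔞⁻¹`. For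
`x ∈ L`, `𝔞 B(y, x) ⊆ 𝔞²` gives `B(y, x) ∈ 𝔞`; thus for `b ∈ 𝔞⁻¹` the vector `b • y` pairs
integrally with `L`, so `b • y ∈ L` by unimodularity. Hence `y ∈ 𝔞𝔞⁻¹ y ⊆ 𝔞L`.
-/

open NumberField Pointwise

noncomputable section

section Helpers

variable {F : Type} [Field F] [NumberField F]

/-- An ideal of the ring of integers, viewed as a submodule of the field. -/
def idealInField (I : Ideal (𝓞 F)) : Submodule (𝓞 F) F :=
  Submodule.map (Algebra.linearMap (𝓞 F) F) I

lemma mem_idealInField {I : Ideal (𝓞 F)} {t : F} :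
    t ∈ idealInField I ↔ ∃ c ∈ I, algebraMap (𝓞 F) F c = t := Iff.rfl

lemma mul_mem_invDiff_iff {I : Ideal (𝓞 F)} {δ : F} (hδ : δ ≠ 0)
    (h : δ • (algebraMap (𝓞 F) F '' (I : Set (𝓞 F))) = invDiff F) (t : F) :
    δ * t ∈ invDiff F ↔ t ∈ idealInField I := by
  rw [← h, ← smul_eq_mul, Set.smul_mem_smul_set_iff₀ hδ]
  rfl

/-- Induction principle expressing `1 ∈ 𝔞𝔞⁻¹`, where `b ∈ 𝔞⁻¹` is spelled out as `b𝔞 ⊆ O`. -/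
lemma one_of_mul_inv {I : Ideal (𝓞 F)} (hI : I ≠ ⊥) (p : F → Prop)
    (hmul : ∀ a ∈ I, ∀ b : F,
      (∀ c ∈ I, ∃ d : 𝓞 F, b * algebraMap (𝓞 F) F c = algebraMap (𝓞 F) F d) →
      p (algebraMap (𝓞 F) F a * b))
    (hadd : ∀ s t, p s → p t → p (s + t)) : p 1 := by
  have hI' : (I : FractionalIdeal (nonZeroDivisors (𝓞 F)) F) ≠ 0 :=
    FractionalIdeal.coeIdeal_ne_zero.mpr hI
  have h1 : (1 : F) ∈ (I : FractionalIdeal (nonZeroDivisors (𝓞 F)) F) *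
      (I : FractionalIdeal (nonZeroDivisors (𝓞 F)) F)⁻¹ := by
    rw [mul_inv_cancel₀ hI']
    exact FractionalIdeal.one_mem_one _
  refine FractionalIdeal.mul_induction_on h1 ?_ hadd
  intro i hi j hj
  obtain ⟨a, ha, rfl⟩ := (FractionalIdeal.mem_coeIdeal _).mp hi
  refine hmul a ha j fun c hc => ?_
  obtain ⟨d, hd⟩ := (FractionalIdeal.mem_one_iff _).mp
    ((FractionalIdeal.mem_inv_iff hI').mp hj _ (FractionalIdeal.mem_coeIdeal_of_mem _ hc))
  exact ⟨d, hd.symm⟩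

/-- The cancellation `𝔞 t ⊆ 𝔞² → t ∈ 𝔞`. -/
lemma mem_of_mul_mem_sq {I : Ideal (𝓞 F)} (hI : I ≠ ⊥) {t : F}
    (h : ∀ a ∈ I, algebraMap (𝓞 F) F a * t ∈ idealInField (I * I)) : t ∈ idealInField I := by
  have key : (1 : F) * t ∈ idealInField I := by
    refine one_of_mul_inv hI (fun z => z * t ∈ idealInField I) ?_ ?_
    · intro a ha b hb
      obtain ⟨c, hc, hct⟩ := h a ha
      -- `b 𝔞² ⊆ 𝔞`, checked on generators of the product ideal.
      have hbc : b * algebraMap (𝓞 F) F c ∈ idealInField I := by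
        refine Submodule.mul_induction_on hc ?_ ?_
        · intro m hm n hn
          obtain ⟨d, hd⟩ := hb m hm
          refine ⟨d * n, I.mul_mem_left d hn, ?_⟩
          simp only [Algebra.linearMap_apply, map_mul]
          rw [← hd]; ring
        · intro x y hx hy
          rw [map_add, mul_add]
          exact add_mem hx hy
      have e : algebraMap (𝓞 F) F a * b * t = b * algebraMap (𝓞 F) F c := by
        have : algebraMap (𝓞 F) F c = algebraMap (𝓞 F) F a * t := hct
        rw [this]; ring
      show algebraMap (𝓞 F) F a * b * t ∈ _
      rw [e]; exact hbc
    · intro s u hs hu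
      show (s + u) * t ∈ _
      rw [add_mul]; exact add_mem hs hu
  rwa [one_mul] at key

variable {V : Type} [AddCommGroup V] [Module F V] [Module (𝓞 F) V] [IsScalarTower (𝓞 F) F V]

lemma polar_mem_sq (Q : QuadraticForm F V) (L : Submodule (𝓞 F) V) (I : Ideal (𝓞 F))
    (hB : ∀ y ∈ L, ∀ x ∈ L, ∃ c : 𝓞 F, QuadraticMap.polar Q y x = algebraMap (𝓞 F) F c)
    {y x : V} (hy : y ∈ I • L) (hx : x ∈ I • L) :
    QuadraticMap.polar Q y x ∈ idealInField (I * I) := by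
  refine Submodule.smul_induction_on hy ?_ ?_
  · intro a ha m hm
    refine Submodule.smul_induction_on hx ?_ ?_
    · intro b hb n hn
      obtain ⟨c, hc⟩ := hB m hm n hn
      refine ⟨a * b * c, Ideal.mul_mem_right _ _ (Ideal.mul_mem_mul ha hb), ?_⟩
      rw [← algebraMap_smul F a m, ← algebraMap_smul F b n, QuadraticMap.polar_smul_left,
        QuadraticMap.polar_smul_right, hc]
      simp only [Algebra.linearMap_apply, map_mul, smul_eq_mul]
      ring
    · intro u v hu hv
      rw [QuadraticMap.polar_add_right]; exact add_mem hu hv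
  · intro u v hu hv
    rw [QuadraticMap.polar_add_left]; exact add_mem hu hv

lemma apply_mem_sq (Q : QuadraticForm F V) (L : Submodule (𝓞 F) V) (I : Ideal (𝓞 F))
    (hQ : ∀ x ∈ L, ∃ c : 𝓞 F, Q x = algebraMap (𝓞 F) F c)
    (hB : ∀ y ∈ L, ∀ x ∈ L, ∃ c : 𝓞 F, QuadraticMap.polar Q y x = algebraMap (𝓞 F) F c)
    {y : V} (hy : y ∈ I • L) : Q y ∈ idealInField (I * I) := by
  -- Additivity of the claim needs the polar form, hence membership in `I • L` is carried along.
  suffices h : y ∈ I • L ∧ Q y ∈ idealInField (I * I) from h.2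
  refine Submodule.smul_induction_on hy ?_ ?_
  · intro a ha m hm
    refine ⟨Submodule.smul_mem_smul ha hm, ?_⟩
    obtain ⟨c, hc⟩ := hQ m hm
    refine ⟨a * a * c, Ideal.mul_mem_right _ _ (Ideal.mul_mem_mul ha ha), ?_⟩
    rw [← algebraMap_smul F a m, QuadraticMap.map_smul, hc]
    simp only [Algebra.linearMap_apply, map_mul, smul_eq_mul]
  · intro u v hu hv
    refine ⟨add_mem hu.1 hv.1, ?_⟩
    rw [QuadraticMap.map_add Q]
    exact add_mem (add_mem hu.2 hv.2) (polar_mem_sq Q L I hB hu.1 hv.1)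

/-- The dual of `𝔞L` with respect to `𝔞²` is contained in `𝔞L`. -/
lemma mem_smul_of_polar_mem_sq (Q : QuadraticForm F V) (L : Submodule (𝓞 F) V)
    {I : Ideal (𝓞 F)} (hI : I ≠ ⊥)
    (hL : ∀ y : V, (∀ x ∈ L, ∃ c : 𝓞 F, QuadraticMap.polar Q y x = algebraMap (𝓞 F) F c) → y ∈ L)
    {y : V} (hy : ∀ x ∈ I • L, QuadraticMap.polar Q y x ∈ idealInField (I * I)) :
    y ∈ I • L := by
  have hyL : ∀ x ∈ L, QuadraticMap.polar Q y x ∈ idealInField I := by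
    intro x hx
    refine mem_of_mul_mem_sq hI fun a ha => ?_
    have h := hy _ (Submodule.smul_mem_smul ha hx)
    rwa [← algebraMap_smul F a x, QuadraticMap.polar_smul_right, smul_eq_mul] at h
  have key : (1 : F) • y ∈ I • L := by
    refine one_of_mul_inv hI (fun z => z • y ∈ I • L) ?_ ?_
    · intro a ha b hb
      show (algebraMap (𝓞 F) F a * b) • y ∈ I • L
      rw [mul_smul, algebraMap_smul]
      refine Submodule.smul_mem_smul ha (hL _ fun x hx => ?_)
      obtain ⟨c, hc, hct⟩ := mem_idealInField.mp (hyL x hx)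
      rw [QuadraticMap.polar_smul_left, ← hct, smul_eq_mul]
      exact hb c hc
    · intro s t hs ht
      show (s + t) • y ∈ I • L
      rw [add_smul]; exact add_mem hs ht
  rwa [one_smul] at key

end Helpers

/-- The scaling construction in the proof of Proposition 2.4 of the paper:
scaling an integral `O`-unimodular lattice `(L, Q)` by `(𝔞, δ)` with
`δ·𝔞² = 𝔡^{-1}` yields an even ℤ-unimodular lattice `(𝔞L, δQ)`. -/
theorem scaling_integral_unimodular_lattice
    (F : Type) [Field F] [NumberField F]
    (htr : Nat.card (F →+* ℝ) = Module.finrank ℚ F)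
    (V : Type) [AddCommGroup V] [Module F V] [FiniteDimensional F V]
    [Module (𝓞 F) V] [IsScalarTower (𝓞 F) F V]
    (Q : QuadraticForm F V)
    (L : Submodule (𝓞 F) V)
    (hFG : L.FG) (hspan : Submodule.span F (L : Set V) = ⊤)
    -- `L` is integral: `Q(x) ∈ O` for all `x ∈ L`
    (hint : ∀ x ∈ L, ∃ c : 𝓞 F, Q x = (c : F))
    -- `L` is `O`-unimodular: `L = L^#`
    (hunimod : (L : Set V) =
      {y : V | ∀ x ∈ L, ∃ c : 𝓞 F, QuadraticMap.polar (⇑Q) y x = (c : F)})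
    (𝔞 : Ideal (𝓞 F)) (h𝔞 : 𝔞 ≠ ⊥) (δ : F) (hδ : δ ≠ 0)
    -- `δ·𝔞² = 𝔡^{-1}` as subsets of `F`
    (hda : δ • (algebraMap (𝓞 F) F '' ((𝔞 * 𝔞 : Ideal (𝓞 F)) : Set (𝓞 F))) = invDiff F) :
    -- `(𝔞L, δQ)` is even
    (∀ y ∈ 𝔞 • L, δ * Q y ∈ invDiff F) ∧
    -- `(𝔞L, δQ)` is ℤ-unimodular
    ((𝔞 • L : Submodule (𝓞 F) V) : Set V) =
      {y : V | ∀ x ∈ 𝔞 • L, δ * QuadraticMap.polar (⇑Q) y x ∈ invDiff F} ∧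
    -- `𝔞L` is nonzero whenever `L` is nonzero
    (L ≠ ⊥ → (𝔞 • L : Submodule (𝓞 F) V) ≠ ⊥) := by
  have hdual : ∀ y : V, y ∈ L ↔
      ∀ x ∈ L, ∃ c : 𝓞 F, QuadraticMap.polar Q y x = algebraMap (𝓞 F) F c :=
    fun y => Set.ext_iff.mp hunimod y
  have hB := fun y hy => (hdual y).mp hy
  refine ⟨fun y hy => ?_, Set.ext fun y => ⟨fun hy x hx => ?_, fun hy => ?_⟩, fun hL hbot => ?_⟩
  · exact (mul_mem_invDiff_iff hδ hda _).mpr (apply_mem_sq Q L 𝔞 hint hB hy)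
  · exact (mul_mem_invDiff_iff hδ hda _).mpr (polar_mem_sq Q L 𝔞 hB hy hx)
  · exact mem_smul_of_polar_mem_sq Q L h𝔞 (fun z hz => (hdual z).mpr hz)
      fun x hx => (mul_mem_invDiff_iff hδ hda _).mp (hy x hx)
  · obtain ⟨x, hx, hx0⟩ := (Submodule.ne_bot_iff _).mp hL
    obtain ⟨a, ha, ha0⟩ := (Submodule.ne_bot_iff _).mp h𝔞
    have h : a • x ∈ 𝔞 • L := Submodule.smul_mem_smul ha hx
    rw [hbot, Submodule.mem_bot, ← algebraMap_smul F a x, smul_eq_zero] at h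
    rcases h with h | h
    · exact ha0 ((FaithfulSMul.algebraMap_eq_zero_iff (𝓞 F) F).mp h)
    · exact hx0 h
end
end

section
/- For every κ = (k₁, k₂) ∈ ℚ², every r ∈ ℕ, every smooth function f : ℍ² → ℂ and every τ ∈ ℍ, the two expressions defining the Rankin–Cohen operator agree: (2πi)^{−r} Σ_{s=0}^{r} (−1)^s C(k₁+r−1, s) C(k₂+r−1, r−s) (∂_{τ₁}^{r−s} ∂_{τ₂}^{s} f)(τ, τ) = Σ_{s=0}^{r} (−1)^{r−s} C(k₁+r−1, s) C(k₂+r−1, r−s) (R̃^{r−s}_{τ₁,k₁} R̃^{s}_{τ₂,k₂} f)(τ, τ); in particular the 1/Im-dependent terms arising from the raising operators cancel upon restriction to the diagonal. -/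
/-!
With `V = (τ - τ̄)⁻¹`, the raising operator is `R̃_k = (i / 2π) (∂ + k V)`, and `∂ V = -V²`. By
induction (`raiseOneIter_eq`) its iterate of order `n` is
`(i / 2π)ⁿ ∑_{j + m = n} C(n, j) (k + j)(k + j + 1) ⋯ (k + n - 1) Vᵐ ∂ʲ`.
The expansions in the two variables combine (`nraiseIter_expand`), because the coefficients coming
from the second variable are constant in the first one. This turns the right-hand side, on the
diagonal, into a sum of terms `V^(p + q) ∂₁^a ∂₂^b f` with `a + p = r - s` and `b + q = s`.

The product of the two binomial coefficients with the two expansion coefficients is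
`(k₁ + a) ⋯ (k₁ + r - 1) (k₂ + b) ⋯ (k₂ + r - 1) / (a! b! p! q!)` (`coeff_factor`). For fixed
`a`, `b` it depends on `p` and `q` only through `1 / (p! q!)`, so the signed sum over
`p + q = r - a - b` is a multiple of `(1 - 1)^(r - a - b)`. It vanishes unless `a + b = r`
(`diagonal_cancel`), and the remaining terms are those of the left-hand side, as
`(i / 2π)^r = (-1)^r (2πi)^(-r)`.
-/


open Complex

noncomputable section

/-- Wirtinger derivative in the first variable of a function on `ℍ²`. -/
def wdz1 (f : ℂ → ℂ → ℂ) : ℂ → ℂ → ℂ := fun z w => wdz (fun z' => f z' w) z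

/-- Wirtinger derivative in the second variable of a function on `ℍ²`. -/
def wdz2 (f : ℂ → ℂ → ℂ) : ℂ → ℂ → ℂ := fun z w => wdz (fun w' => f z w') w

/-- Normalized raising operator `R̃_{τ₁,k}` in the first variable. -/
def nraise1 (k : ℚ) (f : ℂ → ℂ → ℂ) : ℂ → ℂ → ℂ :=
  fun z w => (4 * (Real.pi : ℂ))⁻¹ * (2 * I * wdz1 f z w + ((k : ℂ) / (z.im : ℂ)) * f z w)

/-- Normalized raising operator `R̃_{τ₂,k}` in the second variable. -/
def nraise2 (k : ℚ) (f : ℂ → ℂ → ℂ) : ℂ → ℂ → ℂ :=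
  fun z w => (4 * (Real.pi : ℂ))⁻¹ * (2 * I * wdz2 f z w + ((k : ℂ) / (w.im : ℂ)) * f z w)

/-- Iterated normalized raising operator `R̃ⁿ_{τ₁,k}`. -/
def nraiseIter1 (k : ℚ) : ℕ → (ℂ → ℂ → ℂ) → (ℂ → ℂ → ℂ)
  | 0 => fun f => f
  | n + 1 => fun f => nraise1 (k + 2 * n) (nraiseIter1 k n f)

/-- Iterated normalized raising operator `R̃ⁿ_{τ₂,k}`. -/
def nraiseIter2 (k : ℚ) : ℕ → (ℂ → ℂ → ℂ) → (ℂ → ℂ → ℂ)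
  | 0 => fun f => f
  | n + 1 => fun f => nraise2 (k + 2 * n) (nraiseIter2 k n f)

open Finset.HasAntidiagonal (antidiagonal mem_antidiagonal)

/-- The open upper half-plane as a subset of `ℂ`. -/
def upperH : Set ℂ := {z | 0 < z.im}

/-- The product `ℍ²` of two upper half-planes as a subset of `ℂ × ℂ`. -/
def upperH2 : Set (ℂ × ℂ) := {p | 0 < p.1.im ∧ 0 < p.2.im}

lemma isOpen_upperH : IsOpen upperH := isOpen_lt continuous_const Complex.continuous_im

lemma isOpen_upperH2 : IsOpen upperH2 :=
  (isOpen_lt continuous_const (Complex.continuous_im.comp continuous_fst)).inter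
    (isOpen_lt continuous_const (Complex.continuous_im.comp continuous_snd))

/-! ### Calculus of the Wirtinger derivative -/

lemma wdz_congr {g h : ℂ → ℂ} {z : ℂ} (e : g =ᶠ[nhds z] h) : wdz g z = wdz h z := by
  simp only [wdz, e.fderiv_eq]

lemma wdz_const (c z : ℂ) : wdz (fun _ => c) z = 0 := by
  simp [wdz]

lemma wdz_mul {g h : ℂ → ℂ} {z : ℂ} (hg : DifferentiableAt ℝ g z)
    (hh : DifferentiableAt ℝ h z) :
    wdz (fun x => g x * h x) z = wdz g z * h z + g z * wdz h z := by
  simp only [wdz, fderiv_fun_mul hg hh, _root_.add_apply,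
    _root_.smul_apply, smul_eq_mul]
  ring

lemma wdz_const_mul {h : ℂ → ℂ} {z : ℂ} (c : ℂ) (hh : DifferentiableAt ℝ h z) :
    wdz (fun x => c * h x) z = c * wdz h z := by
  rw [wdz_mul (differentiableAt_const c) hh, wdz_const]; ring

lemma wdz_sum {ι : Type*} (s : Finset ι) {g : ι → ℂ → ℂ} {z : ℂ}
    (hg : ∀ i ∈ s, DifferentiableAt ℝ (g i) z) :
    wdz (fun x => ∑ i ∈ s, g i x) z = ∑ i ∈ s, wdz (g i) z := by
  simp only [wdz, fderiv_fun_sum hg, _root_.sum_apply]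
  rw [Finset.mul_sum, ← Finset.sum_sub_distrib, Finset.sum_div]

lemma contDiffOn_wdz {h : ℂ → ℂ} (hh : ContDiffOn ℝ (⊤ : ℕ∞) h upperH) :
    ContDiffOn ℝ (⊤ : ℕ∞) (wdz h) upperH := by
  have h1 : ContDiffOn ℝ (⊤ : ℕ∞) (fderiv ℝ h) upperH :=
    hh.fderiv_of_isOpen isOpen_upperH (by norm_cast)
  unfold wdz
  exact ((h1.clm_apply contDiffOn_const).sub
    (contDiffOn_const.mul (h1.clm_apply contDiffOn_const))).div_const 2

lemma contDiffOn_wdz_iterate {h : ℂ → ℂ} (hh : ContDiffOn ℝ (⊤ : ℕ∞) h upperH) (n : ℕ) :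
    ContDiffOn ℝ (⊤ : ℕ∞) (wdz^[n] h) upperH := by
  induction n with
  | zero => exact hh
  | succ n ih => rw [Function.iterate_succ_apply']; exact contDiffOn_wdz ih

lemma ContDiffOn.diffAt {h : ℂ → ℂ} (hh : ContDiffOn ℝ (⊤ : ℕ∞) h upperH) {z : ℂ}
    (hz : z ∈ upperH) : DifferentiableAt ℝ h z :=
  (hh.contDiffAt (isOpen_upperH.mem_nhds hz)).differentiableAt (by simp)

lemma wdz_iterate_congr {g h : ℂ → ℂ} (e : Set.EqOn g h upperH) (n : ℕ) :
    Set.EqOn (wdz^[n] g) (wdz^[n] h) upperH := by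
  induction n with
  | zero => exact e
  | succ n ih =>
    intro z hz
    rw [Function.iterate_succ_apply', Function.iterate_succ_apply']
    exact wdz_congr (ih.eventuallyEq_of_mem (isOpen_upperH.mem_nhds hz))

lemma wdz_iterate_sum {ι : Type*} (s : Finset ι) (c : ι → ℂ) (g : ι → ℂ → ℂ)
    (hg : ∀ i ∈ s, ContDiffOn ℝ (⊤ : ℕ∞) (g i) upperH) (n : ℕ) :
    Set.EqOn (wdz^[n] (fun x => ∑ i ∈ s, c i * g i x))
      (fun x => ∑ i ∈ s, c i * wdz^[n] (g i) x) upperH := by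
  induction n with
  | zero => intro z _; rfl
  | succ n ih =>
    intro z hz
    have hd : ∀ i ∈ s, DifferentiableAt ℝ (wdz^[n] (g i)) z := fun i hi =>
      (contDiffOn_wdz_iterate (hg i hi) n).diffAt hz
    rw [Function.iterate_succ_apply',
      wdz_congr (ih.eventuallyEq_of_mem (isOpen_upperH.mem_nhds hz)),
      wdz_sum s (fun i hi => (hd i hi).const_mul (c i))]
    refine Finset.sum_congr rfl fun i hi => ?_
    rw [wdz_const_mul _ (hd i hi), Function.iterate_succ_apply']

/-! ### The function `(τ - τ̄)⁻¹` -/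

/-- The function `(τ - τ̄)⁻¹ = (2i Im τ)⁻¹`; it carries the non-holomorphic part of the raising
operators. -/
def invY (z : ℂ) : ℂ := (2 * I * (z.im : ℂ))⁻¹

lemma contDiff_two_I_im : ContDiff ℝ (⊤ : ℕ∞) (fun z : ℂ => 2 * I * (z.im : ℂ)) :=
  contDiff_const.mul (Complex.ofRealCLM.contDiff.comp Complex.imCLM.contDiff)

lemma two_I_im_ne_zero {z : ℂ} (hz : z ∈ upperH) : 2 * I * (z.im : ℂ) ≠ 0 := by
  have : (z.im : ℂ) ≠ 0 := by exact_mod_cast (ne_of_gt hz)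
  simp [this]

lemma contDiffOn_invY : ContDiffOn ℝ (⊤ : ℕ∞) invY upperH :=
  contDiff_two_I_im.contDiffOn.inv fun _ hz => two_I_im_ne_zero hz

lemma wdz_two_I_im (z : ℂ) : wdz (fun z : ℂ => 2 * I * (z.im : ℂ)) z = 1 := by
  have h : HasFDerivAt (𝕜 := ℝ) (fun z : ℂ => (z.im : ℂ))
      (Complex.ofRealCLM.comp Complex.imCLM) z :=
    (Complex.ofRealCLM.comp Complex.imCLM).hasFDerivAt
  rw [wdz_const_mul _ h.differentiableAt]
  simp only [wdz, h.fderiv]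
  simp
  linear_combination (-1 : ℂ) * I_mul_I

lemma wdz_invY {z : ℂ} (hz : z ∈ upperH) : wdz invY z = - invY z ^ 2 := by
  have h0 := two_I_im_ne_zero hz
  -- Differentiate the identity `invY * (τ - τ̄) = 1`.
  have e : (fun x => invY x * (2 * I * (x.im : ℂ))) =ᶠ[nhds z] fun _ => (1 : ℂ) := by
    filter_upwards [isOpen_upperH.mem_nhds hz] with x hx
    exact inv_mul_cancel₀ (two_I_im_ne_zero hx)
  have h1 := wdz_congr e
  rw [wdz_mul (contDiffOn_invY.diffAt hz) (contDiff_two_I_im.contDiffOn.diffAt hz),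
    wdz_const, wdz_two_I_im] at h1
  have h2 : invY z * (2 * I * (z.im : ℂ)) = 1 := inv_mul_cancel₀ h0
  linear_combination invY z * h1 - wdz invY z * h2

lemma wdz_invY_pow {z : ℂ} (hz : z ∈ upperH) (m : ℕ) :
    wdz (fun x => invY x ^ m) z = - (m : ℂ) * invY z ^ (m + 1) := by
  induction m with
  | zero => simp [wdz_const]
  | succ m ih =>
    simp only [pow_succ _ m]
    rw [wdz_mul ((contDiffOn_invY.pow m).diffAt hz) (contDiffOn_invY.diffAt hz), ih,
      wdz_invY hz]
    push_cast
    ring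

/-! ### Expansion of the iterated raising operator in one variable -/

/-- The normalized raising operator on functions of one variable. -/
def raiseOne (k : ℚ) (h : ℂ → ℂ) : ℂ → ℂ :=
  fun z => (4 * (Real.pi : ℂ))⁻¹ * (2 * I * wdz h z + ((k : ℂ) / (z.im : ℂ)) * h z)

/-- The iterated normalized raising operator on functions of one variable. -/
def raiseOneIter (k : ℚ) : ℕ → (ℂ → ℂ) → (ℂ → ℂ)
  | 0 => fun h => h
  | n + 1 => fun h => raiseOne (k + 2 * n) (raiseOneIter k n h)

/-- The constant `i / 2π = -(2πi)⁻¹`. -/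
def cI : ℂ := I / (2 * (Real.pi : ℂ))

/-- The coefficient of `(τ - τ̄)⁻ᵐ ∂ʲ` in the expansion of the `(j + m)`-th raising operator of
weight `k`, up to the factor `(i / 2π) ^ (j + m)`. -/
def raiseCoeff (k : ℚ) (j m : ℕ) : ℚ :=
  ((j + m).choose j : ℚ) * ∏ i ∈ Finset.range m, (k + j + i)

lemma raiseOne_eq (k : ℚ) (h : ℂ → ℂ) {z : ℂ} (hz : z ∈ upperH) :
    raiseOne k h z = cI * (wdz h z + (k : ℂ) * invY z * h z) := by
  have h1 : (z.im : ℂ) ≠ 0 := by exact_mod_cast (ne_of_gt hz)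
  have h2 : (Real.pi : ℂ) ≠ 0 := by exact_mod_cast Real.pi_ne_zero
  have h3 := I_ne_zero
  simp only [raiseOne, cI, invY]
  field_simp
  ring

lemma raiseCoeff_zero_succ (k : ℚ) (m : ℕ) :
    raiseCoeff k 0 (m + 1) = (k + m) * raiseCoeff k 0 m := by
  simp [raiseCoeff, Finset.prod_range_succ, mul_comm]

lemma raiseCoeff_zero (k : ℚ) (j : ℕ) : raiseCoeff k j 0 = 1 := by
  simp [raiseCoeff]

lemma raiseCoeff_succ_succ (k : ℚ) (j m : ℕ) :
    raiseCoeff k (j + 1) (m + 1) =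
      raiseCoeff k j (m + 1) + (k + 2 * (j + 1) + m) * raiseCoeff k (j + 1) m := by
  have hP : ∏ i ∈ Finset.range (m + 1), (k + j + i) =
      (k + j) * ∏ i ∈ Finset.range m, (k + (j + 1 : ℕ) + i) := by
    rw [Finset.prod_range_succ', mul_comm]
    simp only [Nat.cast_zero, add_zero]
    congr 1
    refine Finset.prod_congr rfl fun i _ => ?_
    push_cast; ring
  have h1 : (j + 1 + (m + 1)).choose (j + 1) =
      (j + (m + 1)).choose j + (j + 1 + m).choose (j + 1) := by
    rw [show j + 1 + (m + 1) = (j + (m + 1)) + 1 by ring, Nat.choose_succ_succ,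
      show j + 1 + m = j + (m + 1) by ring]
  have h2 : (j + 1 + m).choose (j + 1) * (j + 1) = (j + (m + 1)).choose j * (m + 1) := by
    rw [show j + 1 + m = j + (m + 1) by ring, Nat.choose_succ_right_eq]
    congr 1; omega
  have h1' : ((j + 1 + (m + 1)).choose (j + 1) : ℚ) =
      (j + (m + 1)).choose j + (j + 1 + m).choose (j + 1) := by exact_mod_cast h1
  have h2' : ((j + 1 + m).choose (j + 1) : ℚ) * (j + 1) =
      (j + (m + 1)).choose j * (m + 1) := by exact_mod_cast h2
  simp only [raiseCoeff]
  rw [hP, Finset.prod_range_succ, h1']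
  push_cast
  linear_combination (-∏ i ∈ Finset.range m, (k + (j + 1) + (i : ℚ))) * h2'

/-- The recursion for `raiseCoeff` in summed form: it expresses that
`∂ + (k + 2n) (τ - τ̄)⁻¹` maps the expansion of order `n` to the one of order `n + 1`. Here `V`
stands for `(τ - τ̄)⁻¹` and `D j` for the `j`-th derivative. -/
lemma raiseCoeff_sum_succ (k : ℚ) (n : ℕ) (V : ℂ) (D : ℕ → ℂ) :
    ∑ p ∈ antidiagonal (n + 1), (raiseCoeff k p.1 p.2 : ℂ) * (V ^ p.2 * D p.1) =
      ∑ p ∈ antidiagonal n, (raiseCoeff k p.1 p.2 : ℂ) *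
        (V ^ p.2 * D (p.1 + 1) + (k + 2 * p.1 + p.2) * V ^ (p.2 + 1) * D p.1) := by
  let A : ℕ → ℕ → ℂ := fun j m => match j with
    | 0 => 0
    | j + 1 => (raiseCoeff k j m : ℂ)
  let B : ℕ → ℕ → ℂ := fun j m => match m with
    | 0 => 0
    | m + 1 => (k + 2 * j + m) * (raiseCoeff k j m : ℂ)
  have hAB : ∀ p ∈ antidiagonal (n + 1), (raiseCoeff k p.1 p.2 : ℂ) * (V ^ p.2 * D p.1) =
      A p.1 p.2 * (V ^ p.2 * D p.1) + B p.1 p.2 * (V ^ p.2 * D p.1) := by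
    rintro ⟨j, m⟩ hp
    rw [mem_antidiagonal] at hp
    rw [← add_mul]
    congr 1
    cases j with
    | zero =>
      obtain rfl : m = n + 1 := by simpa using hp
      simp [A, B, raiseCoeff_zero_succ]
    | succ j =>
      cases m with
      | zero => simp [A, B, raiseCoeff_zero]
      | succ m => simp only [A, B, raiseCoeff_succ_succ]; push_cast; ring
  rw [Finset.sum_congr rfl hAB, Finset.sum_add_distrib,
    Finset.Nat.sum_antidiagonal_succ, Finset.Nat.sum_antidiagonal_succ']
  simp only [A, B, zero_mul, zero_add]
  rw [← Finset.sum_add_distrib]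
  refine Finset.sum_congr rfl fun p _ => ?_
  ring

/-- The classical expansion of the iterated raising operator in powers of `(τ - τ̄)⁻¹` and
holomorphic derivatives. -/
lemma raiseOneIter_eq (k : ℚ) {h : ℂ → ℂ} (hh : ContDiffOn ℝ (⊤ : ℕ∞) h upperH) (n : ℕ) :
    Set.EqOn (raiseOneIter k n h)
      (fun z => ∑ p ∈ antidiagonal n,
        (cI ^ n * (raiseCoeff k p.1 p.2 : ℂ)) * (invY z ^ p.2 * wdz^[p.1] h z)) upperH := by
  induction n with
  | zero => intro z _; simp [raiseOneIter, raiseCoeff]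
  | succ n ih =>
    intro z hz
    have hV : ∀ m, DifferentiableAt ℝ (fun x => invY x ^ m) z := fun m =>
      (contDiffOn_invY.pow m).diffAt hz
    have hD : ∀ j, DifferentiableAt ℝ (wdz^[j] h) z := fun j =>
      (contDiffOn_wdz_iterate hh j).diffAt hz
    have hs := raiseCoeff_sum_succ k n (invY z) (fun j => wdz^[j] h z)
    simp only [raiseOneIter, mul_assoc, ← Finset.mul_sum]
    rw [hs, raiseOne_eq _ _ hz, wdz_congr (ih.eventuallyEq_of_mem (isOpen_upperH.mem_nhds hz)),
      ih hz, wdz_sum _ (fun p _ => ((hV p.2).fun_mul (hD p.1)).const_mul _)]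
    simp only
    rw [Finset.mul_sum, Finset.mul_sum, ← Finset.sum_add_distrib, Finset.mul_sum]
    refine Finset.sum_congr rfl fun p hp => ?_
    rw [wdz_const_mul _ ((hV p.2).fun_mul (hD p.1)), wdz_mul (hV p.2) (hD p.1), wdz_invY_pow hz,
      Function.iterate_succ_apply']
    have hn : (n : ℂ) = p.1 + p.2 := by exact_mod_cast (mem_antidiagonal.mp hp).symm
    push_cast
    rw [hn]
    ring

/-! ### Passage to two variables -/

lemma nraiseIter1_slice (k : ℚ) (n : ℕ) (g : ℂ → ℂ → ℂ) (z w : ℂ) :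
    nraiseIter1 k n g z w = raiseOneIter k n (fun z' => g z' w) z := by
  induction n generalizing z with
  | zero => rfl
  | succ n ih => simp only [nraiseIter1, raiseOneIter, nraise1, raiseOne, wdz1, ih]

lemma nraiseIter2_slice (k : ℚ) (n : ℕ) (g : ℂ → ℂ → ℂ) (z w : ℂ) :
    nraiseIter2 k n g z w = raiseOneIter k n (fun w' => g z w') w := by
  induction n generalizing w with
  | zero => rfl
  | succ n ih => simp only [nraiseIter2, raiseOneIter, nraise2, raiseOne, wdz2, ih]

lemma wdz1_iterate_slice (n : ℕ) (g : ℂ → ℂ → ℂ) (z w : ℂ) :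
    wdz1^[n] g z w = wdz^[n] (fun z' => g z' w) z := by
  induction n generalizing z with
  | zero => rfl
  | succ n ih => simp only [Function.iterate_succ_apply', wdz1, ih]

lemma wdz2_iterate_slice (n : ℕ) (g : ℂ → ℂ → ℂ) (z w : ℂ) :
    wdz2^[n] g z w = wdz^[n] (fun w' => g z w') w := by
  induction n generalizing w with
  | zero => rfl
  | succ n ih => simp only [Function.iterate_succ_apply', wdz2, ih]

lemma contDiffOn_slice1 {g : ℂ → ℂ → ℂ}
    (hg : ContDiffOn ℝ (⊤ : ℕ∞) (Function.uncurry g) upperH2) {w : ℂ} (hw : w ∈ upperH) :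
    ContDiffOn ℝ (⊤ : ℕ∞) (fun z => g z w) upperH :=
  hg.comp (f := fun z : ℂ => (z, w)) (contDiff_id.prodMk contDiff_const).contDiffOn
    (fun _ hz => ⟨hz, hw⟩)

lemma contDiffOn_slice2 {g : ℂ → ℂ → ℂ}
    (hg : ContDiffOn ℝ (⊤ : ℕ∞) (Function.uncurry g) upperH2) {z : ℂ} (hz : z ∈ upperH) :
    ContDiffOn ℝ (⊤ : ℕ∞) (fun w => g z w) upperH :=
  hg.comp (f := fun w : ℂ => (z, w)) (contDiff_const.prodMk contDiff_id).contDiffOn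
    (fun _ hw => ⟨hz, hw⟩)

/-- The partial derivative `∂_{τ₂}` preserves joint smoothness on `ℍ²`, since it is a combination
of values of the total derivative. -/
lemma contDiffOn_wdz2 {g : ℂ → ℂ → ℂ}
    (hg : ContDiffOn ℝ (⊤ : ℕ∞) (Function.uncurry g) upperH2) :
    ContDiffOn ℝ (⊤ : ℕ∞) (Function.uncurry (wdz2 g)) upperH2 := by
  have h1 : ContDiffOn ℝ (⊤ : ℕ∞) (fderiv ℝ (Function.uncurry g)) upperH2 :=
    hg.fderiv_of_isOpen isOpen_upperH2 (by norm_cast)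
  have h2 : ContDiffOn ℝ (⊤ : ℕ∞) (fun p : ℂ × ℂ =>
      (fderiv ℝ (Function.uncurry g) p (0, 1) -
        I * fderiv ℝ (Function.uncurry g) p (0, I)) / 2) upperH2 :=
    ((h1.clm_apply contDiffOn_const).sub
      (contDiffOn_const.mul (h1.clm_apply contDiffOn_const))).div_const 2
  refine h2.congr ?_
  rintro ⟨z, w⟩ hp
  have hd : DifferentiableAt ℝ (Function.uncurry g) (z, w) :=
    (hg.contDiffAt (isOpen_upperH2.mem_nhds hp)).differentiableAt (by simp)
  have hc : HasFDerivAt (𝕜 := ℝ) (fun w' => g z w')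
      ((fderiv ℝ (Function.uncurry g) (z, w)).comp (ContinuousLinearMap.inr ℝ ℂ ℂ)) w :=
    hd.hasFDerivAt.comp w (hasFDerivAt_prodMk_right z w)
  simp [Function.uncurry, wdz2, wdz, hc.fderiv]

lemma contDiffOn_wdz2_iterate {g : ℂ → ℂ → ℂ}
    (hg : ContDiffOn ℝ (⊤ : ℕ∞) (Function.uncurry g) upperH2) (n : ℕ) :
    ContDiffOn ℝ (⊤ : ℕ∞) (Function.uncurry (wdz2^[n] g)) upperH2 := by
  induction n with
  | zero => exact hg
  | succ n ih => rw [Function.iterate_succ_apply']; exact contDiffOn_wdz2 ih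

/-- The expansion of the raising operators in both variables, at an arbitrary point of `ℍ²`. -/
lemma nraiseIter_expand {f : ℂ → ℂ → ℂ}
    (hf : ContDiffOn ℝ (⊤ : ℕ∞) (Function.uncurry f) upperH2) (k₁ k₂ : ℚ) (x y : ℕ)
    {z w : ℂ} (hz : z ∈ upperH) (hw : w ∈ upperH) :
    nraiseIter1 k₁ x (nraiseIter2 k₂ y f) z w =
      ∑ p ∈ antidiagonal x, ∑ q ∈ antidiagonal y,
        cI ^ (x + y) * ((raiseCoeff k₁ p.1 p.2 : ℂ) * (raiseCoeff k₂ q.1 q.2 : ℂ)) *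
          (invY z ^ p.2 * invY w ^ q.2 * wdz1^[p.1] (wdz2^[q.1] f) z w) := by
  -- For fixed `w` the inner operator is a combination, with coefficients constant in `z`,
  -- of the smooth functions `z ↦ ∂_{τ₂}^b f (z, w)`.
  have e2 : Set.EqOn (fun z' => nraiseIter2 k₂ y f z' w)
      (fun z' => ∑ q ∈ antidiagonal y,
        (cI ^ y * (raiseCoeff k₂ q.1 q.2 : ℂ) * invY w ^ q.2) * wdz2^[q.1] f z' w) upperH := by
    intro z' hz'
    simp only
    rw [nraiseIter2_slice, raiseOneIter_eq k₂ (contDiffOn_slice2 hf hz') y hw]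
    refine Finset.sum_congr rfl fun q _ => ?_
    rw [wdz2_iterate_slice]; ring
  have hs : ∀ q ∈ antidiagonal y,
      ContDiffOn ℝ (⊤ : ℕ∞) (fun z' => wdz2^[q.1] f z' w) upperH := fun q _ =>
    contDiffOn_slice1 (contDiffOn_wdz2_iterate hf q.1) hw
  have hsm : ContDiffOn ℝ (⊤ : ℕ∞) (fun z' => nraiseIter2 k₂ y f z' w) upperH :=
    (ContDiffOn.sum fun q hq => contDiffOn_const.mul (hs q hq)).congr e2
  rw [nraiseIter1_slice, raiseOneIter_eq k₁ hsm x hz]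
  refine Finset.sum_congr rfl fun p _ => ?_
  rw [wdz_iterate_congr e2 p.1 hz, wdz_iterate_sum _ _ _ hs p.1 hz]
  simp only [Finset.mul_sum]
  refine Finset.sum_congr rfl fun q _ => ?_
  rw [wdz1_iterate_slice]; ring

/-! ### Cancellation on the diagonal -/

lemma prod_rising_split (x : ℚ) (n m : ℕ) :
    (∏ i ∈ Finset.range m, (x + (n + m : ℕ) - 1 - i)) * ∏ i ∈ Finset.range n, (x + i) =
      ∏ i ∈ Finset.range (n + m), (x + i) := by
  rw [Finset.prod_range_add, mul_comm]
  congr 1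
  rw [← Finset.prod_range_reflect]
  refine Finset.prod_congr rfl fun i hi => ?_
  have : i + 1 ≤ m := Finset.mem_range.mp hi
  rw [Nat.sub_sub, Nat.cast_sub (by omega)]
  push_cast; ring

/-- The falling product in the binomial coefficient continues the rising product in the expansion
coefficient, and together they form `(k + a)(k + a + 1) ⋯ (k + r - 1)`. -/
lemma gbinom_mul_raiseCoeff (k : ℚ) (a p m r : ℕ) (hr : a + p + m = r) :
    gbinom (k + r - 1) m * raiseCoeff k a p =
      (∏ i ∈ Finset.range (r - a), (k + a + i)) * ((a + p).choose a : ℚ) / m.factorial := by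
  have h := prod_rising_split (k + a) p m
  rw [show r - a = p + m by omega, ← h, gbinom, raiseCoeff]
  rw [show (k + r - 1 : ℚ) = k + a + (p + m : ℕ) - 1 by subst hr; push_cast; ring]
  ring

lemma choose_div (a p : ℕ) : ((a + p).choose a : ℚ) / (a + p).factorial =
    1 / (a.factorial * p.factorial) := by
  rw [Nat.choose_symm_add, Nat.add_choose,
    Nat.cast_div (Nat.factorial_mul_factorial_dvd_factorial_add a p) (by positivity)]
  have : ((a + p).factorial : ℚ) ≠ 0 := by positivity
  push_cast
  field_simp

/-- The full coefficient of `∂_{τ₁}^a ∂_{τ₂}^b` factors, with the splitting of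
`r - a - b = p + q` entering only through `1 / (p! q!)`. -/
lemma coeff_factor (k₁ k₂ : ℚ) (a b p q r : ℕ) (hr : a + b + (p + q) = r) :
    gbinom (k₁ + r - 1) (b + q) * gbinom (k₂ + r - 1) (a + p) *
        (raiseCoeff k₁ a p * raiseCoeff k₂ b q) =
      ((∏ i ∈ Finset.range (r - a), (k₁ + a + i)) * (∏ i ∈ Finset.range (r - b), (k₂ + b + i)) /
        (a.factorial * b.factorial)) * (1 / (p.factorial * q.factorial)) := by
  have h1 := gbinom_mul_raiseCoeff k₁ a p (b + q) r (by omega)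
  have h2 := gbinom_mul_raiseCoeff k₂ b q (a + p) r (by omega)
  have h3 := choose_div a p
  have h4 := choose_div b q
  calc _ = (gbinom (k₁ + r - 1) (b + q) * raiseCoeff k₁ a p) *
        (gbinom (k₂ + r - 1) (a + p) * raiseCoeff k₂ b q) := by ring
    _ = (∏ i ∈ Finset.range (r - a), (k₁ + a + i)) * (∏ i ∈ Finset.range (r - b), (k₂ + b + i)) *
        (((a + p).choose a : ℚ) / (a + p).factorial) *
        (((b + q).choose b : ℚ) / (b + q).factorial) := by rw [h1, h2]; ring
    _ = _ := by rw [h3, h4]; ring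

/-- The binomial theorem for `(-1 + 1) ^ m`, divided by `m!`. -/
lemma alt_sum_eq_zero {m : ℕ} (hm : m ≠ 0) :
    ∑ p ∈ antidiagonal m, (-1 : ℚ) ^ p.1 * (1 / (p.1.factorial * p.2.factorial)) = 0 := by
  have h := (Commute.all (-1 : ℚ) 1).add_pow' m
  rw [neg_add_cancel, zero_pow hm] at h
  have hf : (m.factorial : ℚ) ≠ 0 := by positivity
  have : (m.factorial : ℚ) * ∑ p ∈ antidiagonal m,
      (-1 : ℚ) ^ p.1 * (1 / (p.1.factorial * p.2.factorial)) = 0 := by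
    rw [h, Finset.mul_sum]
    refine Finset.sum_congr rfl fun p hp => ?_
    obtain rfl := mem_antidiagonal.mp hp
    have h4 := choose_div p.1 p.2
    have hf' : ((p.1 + p.2).factorial : ℚ) ≠ 0 := by positivity
    rw [div_eq_iff hf'] at h4
    rw [nsmul_eq_mul, h4]
    ring
  exact (mul_eq_zero.mp this).resolve_left hf

/-- A sum over quadruples with `a + p + b + q = r`, grouped by `(a + p, b + q)` on the left and by
`(a + b, p + q)` on the right. -/
lemma sum_quadruple (r : ℕ) (F : ℕ → ℕ → ℕ → ℕ → ℂ) :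
    ∑ x ∈ antidiagonal r, ∑ p ∈ antidiagonal x.2, ∑ q ∈ antidiagonal x.1,
        F p.1 p.2 q.1 q.2 =
      ∑ x ∈ antidiagonal r, ∑ d ∈ antidiagonal x.2,
        ∑ e ∈ antidiagonal x.1, F d.1 e.1 d.2 e.2 := by
  simp only [Finset.sum_sigma']
  refine Finset.sum_bij'
    (fun t _ => ⟨(t.2.1.2 + t.2.2.2, t.2.1.1 + t.2.2.1), (t.2.1.1, t.2.2.1), (t.2.1.2, t.2.2.2)⟩)
    (fun t _ => ⟨(t.2.1.2 + t.2.2.2, t.2.1.1 + t.2.2.1), (t.2.1.1, t.2.2.1), (t.2.1.2, t.2.2.2)⟩)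
    ?_ ?_ ?_ ?_ ?_
  · rintro ⟨⟨x, y⟩, ⟨a, p⟩, ⟨b, q⟩⟩ h
    simp only [Finset.mem_sigma, mem_antidiagonal] at h ⊢
    exact ⟨show p + q + (a + b) = r by omega, trivial, trivial⟩
  · rintro ⟨⟨x, y⟩, ⟨a, p⟩, ⟨b, q⟩⟩ h
    simp only [Finset.mem_sigma, mem_antidiagonal] at h ⊢
    exact ⟨show p + q + (a + b) = r by omega, trivial, trivial⟩
  · rintro ⟨⟨x, y⟩, ⟨a, p⟩, ⟨b, q⟩⟩ h
    simp only [Finset.mem_sigma, mem_antidiagonal] at h ⊢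
    obtain ⟨_, rfl, rfl⟩ := h
    rfl
  · rintro ⟨⟨x, y⟩, ⟨a, p⟩, ⟨b, q⟩⟩ h
    simp only [Finset.mem_sigma, mem_antidiagonal] at h ⊢
    obtain ⟨_, rfl, rfl⟩ := h
    rfl
  · rintro ⟨⟨x, y⟩, ⟨a, p⟩, ⟨b, q⟩⟩ _
    rfl

/-- On the diagonal, every term carrying a positive power of `V = (τ - τ̄)⁻¹` cancels. Here
`D a b` stands for the value of `∂_{τ₁}^a ∂_{τ₂}^b f`. -/
lemma diagonal_cancel (k₁ k₂ : ℚ) (r : ℕ) (V : ℂ) (D : ℕ → ℕ → ℂ) :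
    ∑ x ∈ antidiagonal r, ∑ p ∈ antidiagonal x.2, ∑ q ∈ antidiagonal x.1,
        (-1 : ℂ) ^ (p.1 + p.2) * ((gbinom (k₁ + (r : ℚ) - 1) (q.1 + q.2) : ℚ) : ℂ) *
          ((gbinom (k₂ + (r : ℚ) - 1) (p.1 + p.2) : ℚ) : ℂ) *
          (((raiseCoeff k₁ p.1 p.2 : ℂ) * (raiseCoeff k₂ q.1 q.2 : ℂ)) *
            (V ^ (p.2 + q.2) * D p.1 q.1)) =
      ∑ x ∈ antidiagonal r,
        (-1 : ℂ) ^ x.2 * ((gbinom (k₁ + (r : ℚ) - 1) x.1 : ℚ) : ℂ) *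
          ((gbinom (k₂ + (r : ℚ) - 1) x.2 : ℚ) : ℂ) * D x.2 x.1 := by
  rw [sum_quadruple r (fun a p b q =>
    (-1 : ℂ) ^ (a + p) * ((gbinom (k₁ + (r : ℚ) - 1) (b + q) : ℚ) : ℂ) *
          ((gbinom (k₂ + (r : ℚ) - 1) (a + p) : ℚ) : ℂ) *
          (((raiseCoeff k₁ a p : ℂ) * (raiseCoeff k₂ b q : ℂ)) *
            (V ^ (p + q) * D a b)))]
  -- Only the terms without a power of `V` survive.
  rw [Finset.sum_eq_single (0, r)]
  · simp only [Finset.Nat.antidiagonal_zero, Finset.sum_singleton, raiseCoeff_zero]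
    rw [← Finset.Nat.sum_antidiagonal_swap]
    refine Finset.sum_congr rfl fun x _ => ?_
    simp
  · rintro ⟨m, u⟩ hx hne
    rw [mem_antidiagonal] at hx
    simp only at hx ⊢
    have hm : m ≠ 0 := by
      rintro rfl
      exact hne (by simp at hx; rw [hx])
    refine Finset.sum_eq_zero fun d hd => ?_
    have h0 : ((∑ p ∈ antidiagonal m,
      (-1 : ℚ) ^ p.1 * (1 / (p.1.factorial * p.2.factorial)) : ℚ) : ℂ) = 0 := by
      rw [alt_sum_eq_zero hm]; simp
    rw [Rat.cast_sum] at h0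
    rw [← mul_zero ((-1 : ℂ) ^ d.1 * V ^ m * D d.1 d.2 *
      (((∏ i ∈ Finset.range (r - d.1), (k₁ + d.1 + i)) *
        (∏ i ∈ Finset.range (r - d.2), (k₂ + d.2 + i)) /
        (d.1.factorial * d.2.factorial) : ℚ) : ℂ)), ← h0, Finset.mul_sum]
    refine Finset.sum_congr rfl fun e he => ?_
    rw [mem_antidiagonal] at hd he
    have hc := congrArg (Rat.cast (K := ℂ)) (coeff_factor k₁ k₂ d.1 d.2 e.1 e.2 r (by omega))
    rw [Rat.cast_mul, Rat.cast_mul, Rat.cast_mul, Rat.cast_mul] at hc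
    rw [Rat.cast_mul, Rat.cast_pow, Rat.cast_neg, Rat.cast_one, he]
    linear_combination (-1 : ℂ) ^ (d.1 + e.1) * (V ^ m * D d.1 d.2) * hc
  · intro h
    exact absurd (by simp) h

/-- Equation (2.5) of the paper: the two expressions for the Rankin–Cohen
operator agree on the diagonal. -/
theorem rcOp_two_expressions_agree (k₁ k₂ : ℚ) (r : ℕ) (f : ℂ → ℂ → ℂ)
    (hf : ContDiffOn ℝ (⊤ : ℕ∞) (Function.uncurry f)
      {p : ℂ × ℂ | 0 < p.1.im ∧ 0 < p.2.im}) :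
    ∀ τ : ℂ, 0 < τ.im →
      ((2 * (Real.pi : ℂ) * I) ^ r)⁻¹ *
        (∑ s ∈ Finset.range (r + 1),
          (-1 : ℂ) ^ s * ((gbinom (k₁ + (r : ℚ) - 1) s : ℚ) : ℂ) *
            ((gbinom (k₂ + (r : ℚ) - 1) (r - s) : ℚ) : ℂ) *
            (wdz1^[r - s] (wdz2^[s] f)) τ τ) =
      ∑ s ∈ Finset.range (r + 1),
        (-1 : ℂ) ^ (r - s) * ((gbinom (k₁ + (r : ℚ) - 1) s : ℚ) : ℂ) *
          ((gbinom (k₂ + (r : ℚ) - 1) (r - s) : ℚ) : ℂ) *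
          (nraiseIter1 k₁ (r - s) (nraiseIter2 k₂ s f)) τ τ := by
  intro τ hτ
  have hz : τ ∈ upperH := hτ
  have hcI : cI = -(2 * (Real.pi : ℂ) * I)⁻¹ := by
    have h2 : (Real.pi : ℂ) ≠ 0 := by exact_mod_cast Real.pi_ne_zero
    have h3 := I_ne_zero
    rw [cI]
    field_simp
    rw [I_sq]
  have hL := Finset.Nat.sum_antidiagonal_eq_sum_range_succ (fun s t =>
    (-1 : ℂ) ^ s * ((gbinom (k₁ + (r : ℚ) - 1) s : ℚ) : ℂ) *
      ((gbinom (k₂ + (r : ℚ) - 1) t : ℚ) : ℂ) * (wdz1^[t] (wdz2^[s] f)) τ τ) r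
  have hR := Finset.Nat.sum_antidiagonal_eq_sum_range_succ (fun s t =>
    (-1 : ℂ) ^ t * ((gbinom (k₁ + (r : ℚ) - 1) s : ℚ) : ℂ) *
      ((gbinom (k₂ + (r : ℚ) - 1) t : ℚ) : ℂ) *
      (nraiseIter1 k₁ t (nraiseIter2 k₂ s f)) τ τ) r
  simp only [Nat.succ_eq_add_one] at hL hR
  rw [← hL, ← hR]
  have key := diagonal_cancel k₁ k₂ r (invY τ) (fun a b => wdz1^[a] (wdz2^[b] f) τ τ)
  calc _ = cI ^ r * ∑ x ∈ antidiagonal r,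
        (-1 : ℂ) ^ x.2 * ((gbinom (k₁ + (r : ℚ) - 1) x.1 : ℚ) : ℂ) *
          ((gbinom (k₂ + (r : ℚ) - 1) x.2 : ℚ) : ℂ) * wdz1^[x.2] (wdz2^[x.1] f) τ τ := by
        rw [Finset.mul_sum, Finset.mul_sum]
        refine Finset.sum_congr rfl fun x hx => ?_
        -- The sign `(-1) ^ r` of `cI ^ r` turns `(-1) ^ (r - s)` into `(-1) ^ s`.
        have hsgn : (-1 : ℂ) ^ r * (-1) ^ x.2 = (-1) ^ x.1 := by
          rw [← mem_antidiagonal.mp hx, pow_add, mul_assoc, ← mul_pow]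
          simp
        rw [hcI, neg_pow (2 * (Real.pi : ℂ) * I)⁻¹, inv_pow, ← hsgn]
        ring
    _ = _ := by
        rw [← key, Finset.mul_sum]
        refine Finset.sum_congr rfl fun x hx => ?_
        rw [nraiseIter_expand hf k₁ k₂ x.2 x.1 hz hz, Finset.mul_sum, Finset.mul_sum]
        refine Finset.sum_congr rfl fun p hp => ?_
        rw [Finset.mul_sum, Finset.mul_sum]
        refine Finset.sum_congr rfl fun q hq => ?_
        rw [mem_antidiagonal] at hx hp hq
        rw [hp, hq, show x.2 + x.1 = r by omega]
        ring
end
end
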